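/- arXiv:1704.04472 — 6 statements merged into one kernel-verified Lean document; each statement's English description precedes it below -/
import Mathlib

section
/- For every alphabet Σ of size σ ≥ 2, every n ∈ ℕ, and every real t with 0 ≤ t ≤ 0.1·ln σ, if S ∈ Σⁿ is chosen uniformly at random, then E[e^{t·(n − L(S))}] ≤ C(t), where C(t) = (σ³ − σ²e^{2t})/(σ³ − 2σ²e^{2t} + e^{4t}). -/
/-!
A bordered string `S` of length `n` has a shortest border `u`. Minimality forces `u` to be
unbordered and `2|u| ≤ n`, so `S = u m u` for some `m` (`exists_decomp`). As `m` is a factor of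
`S`, `L(m) ≤ L(S)` and hence `n - L(S) ≤ 2|u| + (|m| - L(m))`. An unbordered string has
`L(S) = n`. Writing `f n` for the sum of `e^{t(n - L(S))}` over all strings of length `n`, and
`x = e^{2t}`, this gives (`sum_rec`)

  `f n ≤ σ^n + ∑_{1 ≤ k ≤ n/2} N_k x^k f (n - 2k)`,

where `N_k` counts the unbordered strings of length `k`. Since an unbordered string of length
`k ≥ 2` starts and ends with different letters, `N_1 ≤ σ` and `N_k ≤ σ^k - σ^(k-1)` for `k ≥ 2`.
Summing the geometric series, `∑_k N_k x^k σ^(-2k) ≤ q` with `q = r (1 - r/σ) / (1 - r)` and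
`r = x/σ`, so strong induction yields `f n ≤ σ^n / (1 - q)`. Finally `1 / (1 - q) = C(t)`, where
`t ≤ 0.1 ln σ`, that is `x^5 ≤ σ`, guarantees `q < 1`.
-/

open Finset

/-- `S` has a border of length `ℓ`: `1 ≤ ℓ ≤ |S|` and the length-`ℓ` prefix of `S`
equals its length-`ℓ` suffix. -/
def HasBorder {α : Type*} (S : List α) (ℓ : ℕ) : Prop :=
  1 ≤ ℓ ∧ ℓ ≤ S.length ∧ S.take ℓ = S.drop (S.length - ℓ)

/-- A string is unbordered if it has no proper border (no border of length `< |S|`). -/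
def Unbordered {α : Type*} (S : List α) : Prop :=
  ∀ ℓ, ℓ < S.length → ¬ HasBorder S ℓ

/-- `maxUnb S` is `L(S)`: the maximum length of (nonempty) unbordered factors of `S`. -/
noncomputable def maxUnb {α : Type*} (S : List α) : ℕ :=
  sSup {k | ∃ T, T ≠ [] ∧ T <:+: S ∧ Unbordered T ∧ T.length = k}

/-- `p > 0` is a period of `T` if `T[i] = T[i+p]` whenever both indices are valid. -/
def IsPeriod {α : Type*} (T : List α) (p : ℕ) : Prop :=
  0 < p ∧ ∀ (i : ℕ) (h : i + p < T.length),
    T[i]'(Nat.lt_of_le_of_lt (Nat.le_add_right i p) h) = T[i + p]'h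

/-- `per T` is the shortest period of `T`. -/
noncomputable def per {α : Type*} (T : List α) : ℕ := sInf {p | IsPeriod T p}

/-- `borderF S` is `F(S)`: the length of the shortest border of `S`. -/
noncomputable def borderF {α : Type*} (S : List α) : ℕ := sInf {ℓ | HasBorder S ℓ}

/-- `substr S i j` is the factor `S[i,j]` in 1-based closed-interval indexing. -/
def substr {α : Type*} (S : List α) (i j : ℕ) : List α := (S.drop (i - 1)).take (j + 1 - i)

/-! ### Borders and unbordered factors -/

theorem hasBorder_iff {α : Type*} (S : List α) (ℓ : ℕ) :
    HasBorder S ℓ ↔ 1 ≤ ℓ ∧ ℓ ≤ S.length ∧ ∀ i < ℓ, S[i]? = S[i + (S.length - ℓ)]? := by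
  unfold HasBorder
  refine and_congr_right fun _ => and_congr_right fun h2 => ?_
  constructor
  · intro h i hi
    have := congrArg (fun l => l[i]?) h
    simp only [List.getElem?_take, hi, if_true, List.getElem?_drop] at this
    rw [this, add_comm]
  · intro h
    apply List.ext_getElem?
    intro i
    rw [List.getElem?_take, List.getElem?_drop]
    split_ifs with hi
    · rw [h i hi, add_comm]
    · symm
      rw [List.getElem?_eq_none_iff]
      omega

/-- A bordered string is `u m u` with `u` nonempty and unbordered: take for `u` the shortest
border. It is unbordered because a border of a border is a border, and its two occurrences do not
overlap because the overlap would be a shorter border. -/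
theorem exists_decomp {α : Type*} (S : List α) (h : ¬ Unbordered S) :
    ∃ u m, u ≠ [] ∧ Unbordered u ∧ S = u ++ m ++ u := by
  classical
  have hex : ∃ ℓ, ℓ < S.length ∧ HasBorder S ℓ := by
    simpa [Unbordered] using h
  obtain ⟨hk, hb⟩ := Nat.find_spec hex
  have hmin : ∀ j, j < Nat.find hex → ¬ HasBorder S j := fun j hj hbj =>
    Nat.find_min hex hj ⟨hj.trans hk, hbj⟩
  generalize Nat.find hex = k at hk hb hmin
  obtain ⟨h1, h2, h3⟩ := (hasBorder_iff S k).1 hb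
  have hkn : 2 * k ≤ S.length := by
    by_contra hlt
    apply hmin (2 * k - S.length) (by omega)
    rw [hasBorder_iff]
    refine ⟨by omega, by omega, fun i hi => ?_⟩
    rw [h3 i (by omega), h3 (i + (S.length - k)) (by omega)]
    congr 1
    omega
  refine ⟨S.take k, (S.drop k).take (S.length - 2 * k), ?_, ?_, ?_⟩
  · intro h0
    have := congrArg List.length h0
    simp only [List.length_take, List.length_nil] at this
    omega
  · intro j hj hbj
    have hl : (S.take k).length = k := by simp; omega
    rw [hl] at hj
    rw [hasBorder_iff, hl] at hbj
    obtain ⟨b1, b2, b3⟩ := hbj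
    apply hmin j hj
    rw [hasBorder_iff]
    refine ⟨b1, by omega, fun i hi => ?_⟩
    have := b3 i hi
    rw [List.getElem?_take_of_lt (by omega), List.getElem?_take_of_lt (by omega)] at this
    rw [this, h3 (i + (k - j)) (by omega)]
    congr 1
    omega
  · obtain ⟨-, -, h4⟩ := hb
    have e : (S.drop k).drop (S.length - 2 * k) = S.take k := by
      rw [List.drop_drop, h4]
      congr 1
      omega
    conv_lhs => rw [← List.take_append_drop k S,
      ← List.take_append_drop (S.length - 2 * k) (S.drop k), e]
    simp

theorem bddAbove_unb {α : Type*} (S : List α) :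
    BddAbove {k | ∃ T, T ≠ [] ∧ T <:+: S ∧ Unbordered T ∧ T.length = k} := by
  refine ⟨S.length, ?_⟩
  rintro k ⟨T, -, hT, -, rfl⟩
  exact hT.length_le

theorem maxUnb_mono {α : Type*} {S T : List α} (h : T <:+: S) : maxUnb T ≤ maxUnb S := by
  unfold maxUnb
  rcases Set.eq_empty_or_nonempty
    {k | ∃ U, U ≠ [] ∧ U <:+: T ∧ Unbordered U ∧ U.length = k} with he | hne
  · rw [he]; simp
  · apply csSup_le_csSup (bddAbove_unb S) hne
    rintro k ⟨U, h1, h2, h3, h4⟩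
    exact ⟨U, h1, h2.trans h, h3, h4⟩

theorem length_le_maxUnb {α : Type*} {S : List α} (h : Unbordered S) : S.length ≤ maxUnb S := by
  by_cases h0 : S = []
  · simp [h0]
  · exact le_csSup (bddAbove_unb S) ⟨S, h0, List.infix_refl S, h, rfl⟩

/-! ### The recursive inequality -/

/-- The weight `e^{t(|S| - L(S))}` of a string. -/
noncomputable def wt {α : Type*} (t : ℝ) (S : List α) : ℝ :=
  Real.exp (t * ((S.length : ℝ) - (maxUnb S : ℝ)))

theorem wt_le_one {α : Type*} {t : ℝ} (ht : 0 ≤ t) {S : List α} (h : Unbordered S) :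
    wt t S ≤ 1 := by
  have : (S.length : ℝ) ≤ maxUnb S := by exact_mod_cast length_le_maxUnb h
  exact Real.exp_le_one_iff.2 (mul_nonpos_of_nonneg_of_nonpos ht (by linarith))

theorem wt_decomp {α : Type*} {t : ℝ} (ht : 0 ≤ t) (u m : List α) :
    wt t (u ++ m ++ u) ≤ Real.exp (2 * t) ^ u.length * wt t m := by
  have : (maxUnb m : ℝ) ≤ maxUnb (u ++ m ++ u) := by
    exact_mod_cast maxUnb_mono ⟨u, u, rfl⟩
  unfold wt
  rw [← Real.exp_nat_mul, ← Real.exp_add, Real.exp_le_exp]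
  simp only [List.length_append, Nat.cast_add]
  nlinarith [mul_le_mul_of_nonneg_left this ht]

theorem exists_ofFn {α : Type*} {k : ℕ} (l : List α) (h : l.length = k) :
    ∃ u : Fin k → α, List.ofFn u = l := by
  subst h
  exact ⟨l.get, List.ofFn_get l⟩

open Classical in
/-- The number of unbordered strings of length `k`. -/
noncomputable def numUnb (Γ : Type) [Fintype Γ] (k : ℕ) : ℕ :=
  (univ.filter fun u : Fin k → Γ => Unbordered (List.ofFn u)).card

/-- Sum over all strings of length `n`, split by the shortest border: strings `u m u` with `u`
unbordered of length `k` contribute at most `e^{2tk}` times the weight of `m`. -/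
theorem sum_rec (Γ : Type) [Fintype Γ] (n : ℕ) {t : ℝ} (ht : 0 ≤ t) :
    ∑ S : Fin n → Γ, wt t (List.ofFn S) ≤ (Fintype.card Γ : ℝ) ^ n +
      ∑ k ∈ Icc 1 (n / 2), (numUnb Γ k : ℝ) * Real.exp (2 * t) ^ k *
        ∑ m : Fin (n - 2 * k) → Γ, wt t (List.ofFn m) := by
  classical
  let g : (k : ℕ) → (Fin k → Γ) → (Fin (n - 2 * k) → Γ) → (Fin n → Γ) → ℝ := fun k u m S =>
    if List.ofFn S = List.ofFn u ++ List.ofFn m ++ List.ofFn u then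
      Real.exp (2 * t) ^ k * wt t (List.ofFn m) else 0
  have hw : ∀ l : List Γ, 0 ≤ wt t l := fun l => (Real.exp_pos _).le
  have hg : ∀ k u m S, 0 ≤ g k u m S := by
    intro k u m S
    simp only [g]
    split_ifs
    · exact mul_nonneg (by positivity) (hw _)
    · exact le_rfl
  have hpt : ∀ S : Fin n → Γ, wt t (List.ofFn S) ≤ 1 + ∑ k ∈ Icc 1 (n / 2),
      ∑ u ∈ univ.filter (fun u : Fin k → Γ => Unbordered (List.ofFn u)), ∑ m, g k u m S := by
    intro S
    by_cases hS : Unbordered (List.ofFn S)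
    · have := wt_le_one ht hS
      have h2 : 0 ≤ ∑ k ∈ Icc 1 (n / 2),
          ∑ u ∈ univ.filter (fun u : Fin k → Γ => Unbordered (List.ofFn u)), ∑ m, g k u m S :=
        sum_nonneg fun k _ => sum_nonneg fun u _ => sum_nonneg fun m _ => hg k u m S
      linarith
    · obtain ⟨u, m, hu0, hu, hSe⟩ := exists_decomp _ hS
      have hlen := congrArg List.length hSe
      simp only [List.length_ofFn, List.length_append] at hlen
      have hupos : 0 < u.length := List.length_pos_of_ne_nil hu0
      obtain ⟨u', hu'⟩ := exists_ofFn (k := u.length) u rfl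
      obtain ⟨m', hm'⟩ := exists_ofFn (k := n - 2 * u.length) m (by omega)
      have hval : g u.length u' m' S = Real.exp (2 * t) ^ u.length * wt t m := by
        simp only [g]
        rw [hu', hm', if_pos hSe]
      have hle : wt t (List.ofFn S) ≤ g u.length u' m' S := by
        rw [hval, hSe]
        exact wt_decomp ht u m
      have s1 : g u.length u' m' S ≤ ∑ m, g u.length u' m S :=
        single_le_sum (f := fun m => g u.length u' m S) (fun m _ => hg _ _ m _) (mem_univ m')
      have s2 : ∑ m, g u.length u' m S ≤ ∑ u₁ ∈ univ.filter
          (fun u₁ : Fin u.length → Γ => Unbordered (List.ofFn u₁)), ∑ m, g u.length u₁ m S :=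
        single_le_sum (f := fun u₁ => ∑ m, g u.length u₁ m S)
          (fun u₁ _ => sum_nonneg fun m _ => hg _ _ m _)
          (by rw [mem_filter, hu']; exact ⟨mem_univ _, hu⟩)
      have s3 := single_le_sum (f := fun k => ∑ u ∈ univ.filter
          (fun u : Fin k → Γ => Unbordered (List.ofFn u)), ∑ m, g k u m S)
          (s := Icc 1 (n / 2)) (a := u.length)
          (fun k _ => sum_nonneg fun u _ => sum_nonneg fun m _ => hg _ _ m _)
          (by rw [mem_Icc]; omega)
      linarith
  have hS1 : ∀ k u m, ∑ S, g k u m S ≤ Real.exp (2 * t) ^ k * wt t (List.ofFn m) := by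
    intro k u m
    have hc : 0 ≤ Real.exp (2 * t) ^ k * wt t (List.ofFn m) :=
      mul_nonneg (by positivity) (hw _)
    simp only [g]
    rw [← sum_filter, sum_const, nsmul_eq_mul]
    -- `u`, `m` determine the string `u m u`
    have hcard : (univ.filter fun S : Fin n → Γ =>
        List.ofFn S = List.ofFn u ++ List.ofFn m ++ List.ofFn u).card ≤ 1 := by
      rw [card_le_one]
      intro a ha b hb
      simp only [mem_filter] at ha hb
      exact List.ofFn_injective (ha.2.trans hb.2.symm)
    have : ((univ.filter fun S : Fin n → Γ =>
        List.ofFn S = List.ofFn u ++ List.ofFn m ++ List.ofFn u).card : ℝ) ≤ 1 := by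
      exact_mod_cast hcard
    nlinarith
  calc ∑ S : Fin n → Γ, wt t (List.ofFn S)
      ≤ ∑ S : Fin n → Γ, (1 + ∑ k ∈ Icc 1 (n / 2),
        ∑ u ∈ univ.filter (fun u : Fin k → Γ => Unbordered (List.ofFn u)), ∑ m, g k u m S) :=
        sum_le_sum fun S _ => hpt S
    _ = (Fintype.card Γ : ℝ) ^ n + ∑ k ∈ Icc 1 (n / 2),
        ∑ u ∈ univ.filter (fun u : Fin k → Γ => Unbordered (List.ofFn u)),
          ∑ m, ∑ S, g k u m S := by
        rw [sum_add_distrib]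
        congr 1
        · simp
        · rw [sum_comm]
          refine sum_congr rfl fun k _ => ?_
          rw [sum_comm]
          refine sum_congr rfl fun u _ => ?_
          rw [sum_comm]
    _ ≤ _ := by
        gcongr with k hk
        calc _ ≤ ∑ u ∈ univ.filter (fun u : Fin k → Γ => Unbordered (List.ofFn u)),
              ∑ m : Fin (n - 2 * k) → Γ, Real.exp (2 * t) ^ k * wt t (List.ofFn m) :=
              sum_le_sum fun u _ => sum_le_sum fun m _ => hS1 k u m
          _ = _ := by
              rw [sum_const, nsmul_eq_mul, ← mul_sum, mul_assoc]
              rfl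

/-! ### Counting unbordered strings -/

theorem numUnb_one (Γ : Type) [Fintype Γ] : numUnb Γ 1 ≤ Fintype.card Γ := by
  classical
  unfold numUnb
  refine (card_le_univ _).trans ?_
  simp

/-- Of the `σ^(j+2)` strings of length `j + 2`, the `σ^(j+1)` strings whose last letter equals the
first one are bordered. -/
theorem numUnb_add (Γ : Type) [Fintype Γ] (j : ℕ) :
    numUnb Γ (j + 2) + Fintype.card Γ ^ (j + 1) ≤ Fintype.card Γ ^ (j + 2) := by
  classical
  have hinj : Function.Injective
      (fun v : Fin (j + 1) → Γ => (Fin.snoc v (v 0) : Fin (j + 2) → Γ)) := by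
    intro v w h
    have := congrArg (fun f : Fin (j + 2) → Γ => Fin.init f) h
    simpa using this
  have hsub : univ.image (fun v : Fin (j + 1) → Γ => (Fin.snoc v (v 0) : Fin (j + 2) → Γ)) ⊆
      univ.filter fun u : Fin (j + 2) → Γ => ¬ Unbordered (List.ofFn u) := by
    intro u hu
    obtain ⟨v, -, rfl⟩ := mem_image.1 hu
    refine mem_filter.2 ⟨mem_univ _, fun hU => hU 1 (by simp) ?_⟩
    rw [hasBorder_iff]
    refine ⟨le_rfl, by simp, fun i hi => ?_⟩
    obtain rfl : i = 0 := by omega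
    have e0 : (Fin.snoc v (v 0) : Fin (j + 2) → Γ) 0 = v 0 := by
      simp
    have e2 : (⟨j + 1, by omega⟩ : Fin (j + 2)) = Fin.last (j + 1) := rfl
    rw [List.getElem?_ofFn, List.getElem?_ofFn]
    simp [e0, e2]
  have h1 := card_le_card hsub
  rw [card_image_of_injective _ hinj] at h1
  have h2 := card_filter_add_card_filter_not (s := (univ : Finset (Fin (j + 2) → Γ)))
    (fun u => Unbordered (List.ofFn u))
  simp only [card_univ, Fintype.card_fun, Fintype.card_fin] at h1 h2
  unfold numUnb
  omega

/-! ### The geometric series and the constant -/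

/-- Partial sums of `∑ N_k (r/σ)^k` stay below `q = r + (1 - 1/σ) r² / (1 - r)`, with the explicit
remainder of the geometric series as the gap. -/
theorem sum_numUnb (Γ : Type) [Fintype Γ] {s r : ℝ} (hs : (Fintype.card Γ : ℝ) = s) (hs0 : 0 < s)
    (hr0 : 0 ≤ r) (hr1 : r < 1) (M : ℕ) :
    ∑ k ∈ Icc 1 (M + 1), (numUnb Γ k : ℝ) * (r / s) ^ k ≤
      r + (1 - 1 / s) * (r ^ 2 / (1 - r)) - (1 - 1 / s) * (r ^ (M + 2) / (1 - r)) := by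
  have h1r : (1 - r) ≠ 0 := by linarith
  induction M with
  | zero =>
    have h : (numUnb Γ 1 : ℝ) ≤ s := by rw [← hs]; exact_mod_cast numUnb_one Γ
    have : (numUnb Γ 1 : ℝ) * (r / s) ≤ s * (r / s) := by gcongr
    rw [mul_div_cancel₀ _ hs0.ne'] at this
    simpa using this
  | succ M ih =>
    rw [sum_Icc_succ_top (by omega)]
    have h : (numUnb Γ (M + 2) : ℝ) + s ^ (M + 1) ≤ s ^ (M + 2) := by
      rw [← hs]; exact_mod_cast numUnb_add Γ M
    have h2 : (numUnb Γ (M + 2) : ℝ) * (r / s) ^ (M + 2) ≤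
        (s ^ (M + 2) - s ^ (M + 1)) * (r / s) ^ (M + 2) := by
      gcongr
      linarith
    have h3 : (s ^ (M + 2) - s ^ (M + 1)) * (r / s) ^ (M + 2) = (1 - 1 / s) * r ^ (M + 2) := by
      rw [div_pow]
      field_simp
      ring
    have h4 : r ^ (M + 2) = r ^ (M + 2) / (1 - r) - r ^ (M + 1 + 2) / (1 - r) := by
      field_simp
      ring
    have h5 : (1 - 1 / s) * r ^ (M + 2) = (1 - 1 / s) * (r ^ (M + 2) / (1 - r)) -
        (1 - 1 / s) * (r ^ (M + 1 + 2) / (1 - r)) := by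
      rw [← mul_sub, ← h4]
    show _ + (numUnb Γ (M + 2) : ℝ) * (r / s) ^ (M + 2) ≤ _
    linarith

/-- Positivity of the denominator of `C(t)`. For `σ = 2` it is `(4 - x)² - 8`, positive as
`x < 1.17 < 4 - 2√2`; for `σ ≥ 3` already `2x < σ`. -/
theorem den_pos (σ : ℕ) (hσ : 2 ≤ σ) {x : ℝ} (hx : 1 ≤ x) (hx5 : x ^ 5 ≤ σ) :
    0 < (σ : ℝ) ^ 3 - 2 * (σ : ℝ) ^ 2 * x + x ^ 2 := by
  rcases hσ.eq_or_lt with rfl | h3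
  · have : x < 1.17 := by
      by_contra hc
      have : (1.17 : ℝ) ^ 5 ≤ x ^ 5 := by gcongr; linarith
      norm_num at this hx5
      linarith
    norm_num
    nlinarith
  · have h3' : (3 : ℝ) ≤ σ := by exact_mod_cast h3
    have : 2 * x < σ := by
      by_contra hc
      have h1 : (σ : ℝ) ^ 5 ≤ (2 * x) ^ 5 := by gcongr; linarith
      have h2 : (3 : ℝ) ^ 4 * σ ≤ σ ^ 4 * σ := by gcongr
      have h4 : (2 * x) ^ 5 = 32 * x ^ 5 := by ring
      have h6 : (σ : ℝ) ^ 4 * σ = (σ : ℝ) ^ 5 := by ring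
      linarith
    have : 0 < (σ : ℝ) ^ 2 * (σ - 2 * x) := mul_pos (by positivity) (by linarith)
    nlinarith [sq_nonneg x]

theorem sum_wt_le (σ : ℕ) (hσ : 2 ≤ σ) (Γ : Type) [Fintype Γ] (hcard : Fintype.card Γ = σ)
    {t c q : ℝ} (ht : 0 ≤ t) (hxσ : Real.exp (2 * t) < σ)
    (hq : q = Real.exp (2 * t) / σ +
      (1 - 1 / (σ : ℝ)) * ((Real.exp (2 * t) / σ) ^ 2 / (1 - Real.exp (2 * t) / σ)))
    (hc0 : 0 ≤ c) (hc : 1 + q * c ≤ c) (n : ℕ) :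
    ∑ S : Fin n → Γ, wt t (List.ofFn S) ≤ c * (σ : ℝ) ^ n := by
  induction n using Nat.strong_induction_on with
  | _ n ih =>
  have hσ2 : (2 : ℝ) ≤ σ := by exact_mod_cast hσ
  have hσ0 : (0 : ℝ) < σ := by linarith
  have hx0 : 0 < Real.exp (2 * t) := Real.exp_pos _
  have hr1 : Real.exp (2 * t) / σ < 1 := (div_lt_one hσ0).2 hxσ
  have hinv : 0 ≤ 1 - 1 / (σ : ℝ) := by
    have : 1 / (σ : ℝ) ≤ 1 := (div_le_one hσ0).2 (by linarith)
    linarith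
  have h1r : 0 < 1 - Real.exp (2 * t) / σ := by linarith
  have hqsum : ∑ k ∈ Icc 1 (n / 2),
      (numUnb Γ k : ℝ) * (Real.exp (2 * t) / σ / σ) ^ k ≤ q := by
    rcases Nat.eq_zero_or_pos (n / 2) with h0 | hpos
    · rw [h0, hq]
      simp only [Icc_eq_empty_of_lt zero_lt_one, sum_empty]
      positivity
    · obtain ⟨M, hM⟩ : ∃ M, n / 2 = M + 1 := ⟨n / 2 - 1, by omega⟩
      have := sum_numUnb Γ (s := (σ : ℝ)) (r := Real.exp (2 * t) / σ) (by rw [hcard]) hσ0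
        (by positivity) hr1 M
      have h2 : 0 ≤ (1 - 1 / (σ : ℝ)) *
          ((Real.exp (2 * t) / σ) ^ (M + 2) / (1 - Real.exp (2 * t) / σ)) := by positivity
      rw [hM, hq]
      linarith
  have hrec := sum_rec Γ n ht
  rw [hcard] at hrec
  calc _ ≤ _ := hrec
    _ ≤ (σ : ℝ) ^ n + ∑ k ∈ Icc 1 (n / 2), (numUnb Γ k : ℝ) * Real.exp (2 * t) ^ k *
        (c * (σ : ℝ) ^ (n - 2 * k)) := by
        gcongr with k hk
        rw [mem_Icc] at hk
        exact ih _ (by omega)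
    _ = (σ : ℝ) ^ n + c * (σ : ℝ) ^ n * ∑ k ∈ Icc 1 (n / 2),
        (numUnb Γ k : ℝ) * (Real.exp (2 * t) / σ / σ) ^ k := by
        rw [mul_sum]
        congr 1
        refine sum_congr rfl fun k hk => ?_
        rw [mem_Icc] at hk
        have : (σ : ℝ) ^ n = (σ : ℝ) ^ (n - 2 * k) * ((σ : ℝ) ^ k * (σ : ℝ) ^ k) := by
          rw [← pow_add, ← pow_add]
          congr 1
          omega
        rw [this, div_pow, div_pow]
        field_simp
    _ ≤ (σ : ℝ) ^ n + c * (σ : ℝ) ^ n * q := by gcongr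
    _ = (1 + q * c) * (σ : ℝ) ^ n := by ring
    _ ≤ c * (σ : ℝ) ^ n := by gcongr

/-- Lemma 1 of the paper: for a uniformly random `S ∈ Σⁿ` over an alphabet of
size `σ ≥ 2` and `0 ≤ t ≤ 0.1 ln σ`, the moment-generating function of `n - L(S)` is at most
`C(t) = (σ³ - σ²e^{2t}) / (σ³ - 2σ²e^{2t} + e^{4t})`. -/
theorem mgf_bound (σ : ℕ) (hσ : 2 ≤ σ) (Γ : Type) [Fintype Γ]
    (hcard : Fintype.card Γ = σ) (n : ℕ) (t : ℝ)
    (ht0 : 0 ≤ t) (ht1 : t ≤ 0.1 * Real.log σ) :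
    (∑ S : Fin n → Γ, Real.exp (t * ((n : ℝ) - (maxUnb (List.ofFn S) : ℝ)))) / (σ : ℝ) ^ n ≤
      ((σ : ℝ) ^ 3 - (σ : ℝ) ^ 2 * Real.exp (2 * t)) /
        ((σ : ℝ) ^ 3 - 2 * (σ : ℝ) ^ 2 * Real.exp (2 * t) + Real.exp (4 * t)) := by
  have hσ2 : (2 : ℝ) ≤ σ := by exact_mod_cast hσ
  have hσ0 : (0 : ℝ) < σ := by linarith
  have hx1 : 1 ≤ Real.exp (2 * t) := Real.one_le_exp (by linarith)
  have hx5 : Real.exp (2 * t) ^ 5 ≤ σ := by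
    rw [← Real.exp_nat_mul, ← Real.le_log_iff_exp_le hσ0]
    push_cast
    linarith
  have hx4 : Real.exp (4 * t) = Real.exp (2 * t) ^ 2 := by
    rw [← Real.exp_nat_mul]
    congr 1
    push_cast
    ring
  have hD := den_pos σ hσ hx1 hx5
  have hsum := fun q => sum_wt_le σ hσ Γ hcard (t := t) (n := n)
    (c := ((σ : ℝ) ^ 3 - (σ : ℝ) ^ 2 * Real.exp (2 * t)) /
        ((σ : ℝ) ^ 3 - 2 * (σ : ℝ) ^ 2 * Real.exp (2 * t) + Real.exp (4 * t))) (q := q) ht0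
  rw [hx4] at hsum ⊢
  have hw : ∀ S : Fin n → Γ, Real.exp (t * ((n : ℝ) - (maxUnb (List.ofFn S) : ℝ))) =
      wt t (List.ofFn S) := by
    intro S
    simp [wt]
  simp only [hw]
  generalize Real.exp (2 * t) = x at *
  have hxσ : x < σ := by
    rcases hx1.eq_or_lt with h | h
    · linarith
    · exact (lt_self_pow₀ h (by norm_num)).trans_le hx5
  rw [div_le_iff₀ (by positivity)]
  refine hsum _ hxσ rfl ?_ (le_of_eq ?_)
  · apply div_nonneg _ hD.le
    have : 0 ≤ (σ : ℝ) ^ 2 * (σ - x) := mul_nonneg (by positivity) (by linarith)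
    linarith
  · have h1 : (σ : ℝ) - x ≠ 0 := by linarith
    have h2 : 1 - x / σ = (σ - x) / σ := by field_simp
    rw [h2]
    have hD' := hD.ne'
    generalize hDe : (σ : ℝ) ^ 3 - 2 * (σ : ℝ) ^ 2 * x + x ^ 2 = D at hD' ⊢
    field_simp
    rw [← hDe]
    ring
end

section
/- There exists an absolute constant c > 0 such that for every alphabet Σ of size σ ≥ 2, every n ∈ ℕ, and every real δ with 0 < δ ≤ 1, if S ∈ Σⁿ is chosen uniformly at random, then with probability at least 1 − δ one has n − L(S) ≤ c·(1 + log_σ(1/δ)). Equivalently, for each δ > 0, L(S) = n − O(log_σ δ^{-1}) with probability at least 1 − δ. -/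
/-!
Call a word `K`-bad if all its nonempty factors obtained by deleting fewer than `K` letters at the
two ends are bordered; `n - L(S) ≥ K > 0` makes `S` a `K`-bad word. The point is that there are at
most `4 σ ^ n / r ^ K` such words of length `n`, where `r = σ ^ (1 / 8)`.

A bordered word has a border of length `p` with at most half its length (`bordered_short`), so the
word is determined by `p` and by what is left after deleting its last `p` letters. If all prefixes
of length `N - j`, `j < K`, of a word of length `N` are bordered, then the shortened word has the
same property for `N - p` and `K - p`. Hence the number `y K N` of such words satisfies
`y K N ≤ ∑ p, y (K - p) (N - p)`, and `y K N ≤ σ ^ N / r ^ K` follows by induction as soon as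
`∑ p, (r / σ) ^ p ≤ 1` (`ncard_prefBordered_le`).

For `σ ≥ 3` this inequality holds with `p` ranging over all positive integers. For `σ = 2` it holds
once `p = 2` is left out, which is legitimate for words starting with two equal letters, since
for them a border of length 2 gives one of length 1. A binary word starting with two different
letters is determined by its tail, which is `(K - 1)`-bad; the resulting recursion costs only the
constant factor 4 (`ncard_factBordered_two`).

With `c = 16` and `K` the least integer above `c (1 + log_σ (1 / δ))`, one gets
`4 / r ^ K ≤ 4 δ / σ ^ 2 ≤ δ`.
-/

open Finset

/-! ### Borders -/

/-- The shortest border of a bordered word does not overlap itself. -/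
theorem bordered_short {α : Type*} (T : List α) (hT : ¬ Unbordered T) :
    ∃ p, 1 ≤ p ∧ 2 * p ≤ T.length ∧ HasBorder T p := by
  classical
  have hex : ∃ p, HasBorder T p ∧ p < T.length := by
    unfold Unbordered at hT
    push Not at hT
    obtain ⟨p, h1, h2⟩ := hT
    exact ⟨p, h2, h1⟩
  obtain ⟨hb, hlt⟩ := Nat.find_spec hex
  set p := Nat.find hex with hp
  refine ⟨p, hb.1, ?_, hb⟩
  by_contra hcon
  push Not at hcon
  obtain ⟨h1, h2, h3⟩ := hb
  -- an overlapping border of length `p` yields one of length `2 * p - T.length`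
  refine Nat.find_min hex (m := 2 * p - T.length) (by omega) ⟨⟨by omega, by omega, ?_⟩, by omega⟩
  have e1 : T.length - (2 * p - T.length) = (T.length - p) + (T.length - p) := by omega
  have e2 : 2 * p - T.length = p - (T.length - p) := by omega
  rw [e1, ← List.drop_drop, ← h3, List.drop_take, ← h3, List.take_take, e2]
  congr 1
  omega

theorem unbordered_singleton {α : Type*} (a : α) : Unbordered [a] := by
  intro l hl hb
  have := hb.1
  simp at hl
  omega

/-! ### Words with many bordered prefixes -/

/-- The words `T` of length `N` each of whose prefixes of length `N - j`, `j < K`, has a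
non-overlapping border with length in `Q`. -/
def PrefBordered (α : Type*) (Q : ℕ → Prop) (K N : ℕ) : Set (List α) :=
  {T | T.length = N ∧ ∀ j < K, ∃ p, Q p ∧ 1 ≤ p ∧ 2 * p ≤ N - j ∧ HasBorder (T.take (N - j)) p}

/-- The words of length `N` whose nonempty factors of length greater than `N - K` are all
bordered. -/
def FactBordered (α : Type*) (K N : ℕ) : Set (List α) :=
  {T | T.length = N ∧ ∀ U, U ≠ [] → U <:+: T → N < U.length + K → ¬ Unbordered U}

theorem finite_of_length {α : Type*} [Fintype α] {N : ℕ} {A : Set (List α)}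
    (h : ∀ T ∈ A, T.length = N) : A.Finite :=
  (List.finite_length_eq α N).subset h

theorem ncard_le_of_length {α : Type*} [Fintype α] {N : ℕ} {A : Set (List α)}
    (h : ∀ T ∈ A, T.length = N) : A.ncard ≤ Fintype.card α ^ N := by
  have h1 : A ⊆ (fun S : Fin N → α => List.ofFn S) '' Set.univ := by
    intro T hT
    have := h T hT
    subst this
    exact ⟨fun i => T.get i, trivial, List.ofFn_get T⟩
  calc A.ncard ≤ _ := Set.ncard_le_ncard h1 (Set.toFinite _)
    _ ≤ (Set.univ : Set (Fin N → α)).ncard := Set.ncard_image_le (Set.toFinite _)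
    _ = _ := by rw [Set.ncard_univ]; simp

/-- A word with a non-overlapping border of length `p` is recovered from `p` and the word with its
last `p` letters removed. -/
theorem prefBordered_subset (α : Type*) (Q : ℕ → Prop) [DecidablePred Q] (K N : ℕ) (hK : 0 < K) :
    PrefBordered α Q K N ⊆ ⋃ p ∈ (Finset.Icc 1 N).filter Q,
      (fun T : List α => T ++ T.take p) '' PrefBordered α Q (K - p) (N - p) := by
  rintro T ⟨hlen, hT⟩
  obtain ⟨p, hQ, hp1, hp2, hb⟩ := hT 0 hK
  rw [Nat.sub_zero, ← hlen, List.take_length] at hb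
  obtain ⟨-, -, hb⟩ := hb
  simp only [Set.mem_iUnion]
  refine ⟨p, by simp; refine ⟨by omega, hQ⟩, T.take (N - p), ⟨by simp; omega, ?_⟩, ?_⟩
  · intro j hj
    obtain ⟨q, h1, h2, h3, h4⟩ := hT (j + p) (by omega)
    refine ⟨q, h1, h2, by omega, ?_⟩
    rw [List.take_take, min_eq_left (by omega)]
    rwa [show N - p - j = N - (j + p) by omega]
  · have : min p (N - p) = p := by omega
    simp only [List.take_take, this]
    rw [hb, hlen, List.take_append_drop]

/-- Exponential decay in `K`, from the recursion of `prefBordered_subset`. -/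
theorem ncard_prefBordered_le (α : Type*) [Fintype α] (Q : ℕ → Prop) [DecidablePred Q] (r : ℝ)
    (hr : 1 ≤ r) (hc : 0 < Fintype.card α)
    (hsum : ∀ M, ∑ p ∈ (Finset.Icc 1 M).filter Q, (r / Fintype.card α) ^ p ≤ 1) :
    ∀ K N, ((PrefBordered α Q K N).ncard : ℝ) * r ^ K ≤ (Fintype.card α : ℝ) ^ N := by
  intro K
  induction K using Nat.strong_induction_on with
  | _ K ih =>
  intro N
  rcases Nat.eq_zero_or_pos K with rfl | hK
  · rw [pow_zero, mul_one]
    exact_mod_cast ncard_le_of_length (A := PrefBordered α Q 0 N) (fun T hT => hT.1)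
  have hfin : ∀ K N, (PrefBordered α Q K N).Finite := fun K N => finite_of_length fun T hT => hT.1
  set s := (Finset.Icc 1 N).filter Q with hs
  have h1 : (PrefBordered α Q K N).ncard ≤ ∑ p ∈ s, (PrefBordered α Q (K - p) (N - p)).ncard := by
    calc _ ≤ _ := Set.ncard_le_ncard (prefBordered_subset α Q K N hK)
          (Set.Finite.biUnion (Finset.finite_toSet s) fun p _ => (hfin _ _).image _)
      _ ≤ _ := Finset.set_ncard_biUnion_le _ _
      _ ≤ _ := Finset.sum_le_sum fun p _ => Set.ncard_image_le (hfin _ _)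
  have hr0 : 0 < r := by linarith
  have hc' : (0 : ℝ) < Fintype.card α := by exact_mod_cast hc
  calc ((PrefBordered α Q K N).ncard : ℝ) * r ^ K
      ≤ (∑ p ∈ s, ((PrefBordered α Q (K - p) (N - p)).ncard : ℝ)) * r ^ K := by
        gcongr; exact_mod_cast h1
    _ = ∑ p ∈ s, ((PrefBordered α Q (K - p) (N - p)).ncard : ℝ) * r ^ K := Finset.sum_mul _ _ _
    _ ≤ ∑ p ∈ s, (Fintype.card α : ℝ) ^ N * (r / Fintype.card α) ^ p := by
        refine Finset.sum_le_sum fun p hp => ?_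
        simp only [hs, Finset.mem_filter, Finset.mem_Icc] at hp
        have h2 := ih (K - p) (by omega) (N - p)
        -- the truncated difference `K - p` only helps, as `1 ≤ r`
        have h3 : r ^ K ≤ r ^ (K - p) * r ^ p := by
          rw [← pow_add]; exact pow_le_pow_right₀ hr (by omega)
        have h4 : (Fintype.card α : ℝ) ^ N
            = (Fintype.card α : ℝ) ^ (N - p) * (Fintype.card α : ℝ) ^ p := by
          rw [← pow_add]; congr 1; omega
        calc _ ≤ ((PrefBordered α Q (K - p) (N - p)).ncard : ℝ) * (r ^ (K - p) * r ^ p) := by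
              gcongr
          _ = (((PrefBordered α Q (K - p) (N - p)).ncard : ℝ) * r ^ (K - p)) * r ^ p := by ring
          _ ≤ (Fintype.card α : ℝ) ^ (N - p) * r ^ p := by gcongr
          _ = _ := by rw [h4, div_pow]; field_simp
    _ = (Fintype.card α : ℝ) ^ N * ∑ p ∈ s, (r / Fintype.card α) ^ p := by rw [Finset.mul_sum]
    _ ≤ (Fintype.card α : ℝ) ^ N * 1 := by gcongr; exact hsum N
    _ = _ := mul_one _

/-! ### Words with no long unbordered factor -/

/-- Single letters are unbordered, so `K` cannot reach the length of the word. -/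
theorem factBordered_lt {α : Type*} {K N : ℕ} (hN : 1 ≤ N) {T : List α}
    (hT : T ∈ FactBordered α K N) : K < N := by
  obtain ⟨hlen, hT⟩ := hT
  match T, hlen with
  | [], h => simp at h; omega
  | a :: t, _ =>
    by_contra hcon
    refine hT [a] (by simp) ⟨[], t, by simp⟩ ?_ (unbordered_singleton a)
    simp; omega

theorem factBordered_take {α : Type*} {K N : ℕ} (hN : 1 ≤ N) {T : List α}
    (hT : T ∈ FactBordered α K N) {j : ℕ} (hj : j < K) :
    ∃ p, 1 ≤ p ∧ 2 * p ≤ N - j ∧ HasBorder (T.take (N - j)) p := by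
  have hK := factBordered_lt hN hT
  obtain ⟨hlen, hT⟩ := hT
  have hl : (T.take (N - j)).length = N - j := by simp; omega
  have := bordered_short (T.take (N - j)) (hT _ ?_ (List.take_prefix _ _).isInfix (by omega))
  · rwa [hl] at this
  · intro h0
    rw [h0] at hl
    simp at hl; omega

theorem hasBorder_one_of_two {α : Type*} {a : α} {t : List α}
    (h : HasBorder (a :: a :: t) 2) : HasBorder (a :: a :: t) 1 := by
  obtain ⟨-, -, h⟩ := h
  refine ⟨le_rfl, by simp, ?_⟩
  have e : (a :: a :: t).length - 1 = ((a :: a :: t).length - 2) + 1 := by simp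
  rw [e, ← List.drop_drop, ← h]
  simp

/-- For a word starting with two equal letters, border length 2 can be avoided. -/
theorem factBordered_double {α : Type*} {K N : ℕ} {a : α} {t : List α}
    (hT : a :: a :: t ∈ FactBordered α K N) :
    a :: a :: t ∈ PrefBordered α (fun p => p ≠ 2) K N := by
  refine ⟨hT.1, fun j hj => ?_⟩
  have hN : 1 ≤ N := by have := hT.1; simp at this; omega
  obtain ⟨p, h1, h2, h3⟩ := factBordered_take hN hT hj
  by_cases hp : p = 2
  · subst hp
    refine ⟨1, by simp, le_rfl, by omega, ?_⟩
    obtain ⟨m, hm⟩ : ∃ m, N - j = m + 2 := ⟨N - j - 2, by omega⟩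
    rw [hm, List.take_succ_cons, List.take_succ_cons] at h3 ⊢
    exact hasBorder_one_of_two h3
  · exact ⟨p, hp, h1, h2, h3⟩

/-- Over two letters, with `f` exchanging them, a word starting with two different letters is
recovered by prepending to its tail the `f`-image of the first letter of that tail. -/
theorem factBordered_subset {α : Type*} (f : α → α)
    (hf : ∀ a b, a ≠ b → a = f b) (K N : ℕ) (hK : 1 ≤ K) (hN : 1 ≤ N) :
    FactBordered α K (N + 1) ⊆ PrefBordered α (fun p => p ≠ 2) K (N + 1) ∪
      (fun T : List α => (T.head?.map f).toList ++ T) '' FactBordered α (K - 1) N := by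
  classical
  intro T hT
  match T, hT with
  | [], h => have := h.1; simp at this
  | [a], h => have := h.1; simp at this; omega
  | a :: b :: t, h =>
    by_cases hab : a = b
    · subst hab
      exact Or.inl (factBordered_double h)
    · refine Or.inr ⟨b :: t, ⟨by have := h.1; simpa using this, ?_⟩, ?_⟩
      · intro U h1 h2 h3
        exact h.2 U h1 (h2.trans (List.suffix_cons _ _).isInfix) (by omega)
      · simp [← hf a b hab]

/-- Binary alphabet: the bound `r / 2 ≤ 9 / 16` makes `x + x ^ 3 / (1 - x) ≤ 1` for `x = r / 2`, the
sum of `x ^ p` over the border lengths `p ≠ 2`. -/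
theorem ncard_factBordered_two (α : Type*) [Fintype α] (hc : Fintype.card α = 2) (r : ℝ)
    (hr : 1 ≤ r) (hr2 : r / 2 ≤ 9 / 16) :
    ∀ N K, 1 ≤ N → ((FactBordered α K N).ncard : ℝ) * r ^ K ≤ 4 * 2 ^ N := by
  classical
  have hr0 : 0 < r := by linarith
  have hsum : ∀ M, ∑ p ∈ (Finset.Icc 1 M).filter (fun p => p ≠ 2),
      (r / Fintype.card α) ^ p ≤ 1 := by
    intro M
    rw [hc]
    push_cast
    set x := r / 2
    have hx : 0 < x := by positivity
    have hsub : (Finset.Icc 1 M).filter (fun p => p ≠ 2) ⊆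
        insert 1 ((Finset.range M).image (fun i => i + 3)) := by
      intro p hp
      simp only [Finset.mem_filter, Finset.mem_Icc] at hp
      simp only [Finset.mem_insert, Finset.mem_image, Finset.mem_range]
      by_cases h1 : p = 1
      · exact Or.inl h1
      · exact Or.inr ⟨p - 3, by omega, by omega⟩
    calc _ ≤ ∑ p ∈ insert 1 ((Finset.range M).image (fun i => i + 3)), x ^ p :=
          Finset.sum_le_sum_of_subset_of_nonneg hsub fun _ _ _ => by positivity
      _ = x + x ^ 3 * ∑ i ∈ Finset.range M, x ^ i := by
          rw [Finset.sum_insert (by simp), Finset.sum_image (by simp), Finset.mul_sum, pow_one]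
          congr 1
          exact Finset.sum_congr rfl fun i _ => by ring
      _ ≤ 9 / 16 + (9 / 16) ^ 3 * ∑ i ∈ Finset.range M, (9 / 16 : ℝ) ^ i := by gcongr
      _ ≤ 9 / 16 + (9 / 16) ^ 3 * (16 / 7) := by
          gcongr
          rw [geom_sum_eq (by norm_num)]
          have : (0 : ℝ) < (9 / 16) ^ M := by positivity
          rw [show (9 / 16 - 1 : ℝ) = -(7 / 16) by norm_num, div_neg, neg_le,
            le_div_iff₀ (by norm_num)]
          linarith
      _ ≤ 1 := by norm_num
  obtain ⟨f, hf⟩ : ∃ f : α → α, ∀ a b, a ≠ b → a = f b := by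
    let e : α ≃ Fin 2 := Fintype.equivFinOfCardEq hc
    refine ⟨fun b => e.symm (e b + 1), fun a b hab => ?_⟩
    rw [Equiv.eq_symm_apply]
    have : e a ≠ e b := fun h => hab (e.injective h)
    generalize e a = x at *
    generalize e b = y at *
    revert x y
    decide
  have hY := ncard_prefBordered_le α (fun p => p ≠ 2) r hr (by omega) hsum
  rw [hc] at hY
  push_cast at hY
  intro N
  induction N with
  | zero => intro K h; omega
  | succ N ih =>
    intro K _
    rcases Nat.eq_zero_or_pos K with rfl | hK
    · have := ncard_le_of_length (A := FactBordered α 0 (N + 1)) (fun T hT => hT.1)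
      rw [hc] at this
      have h' : ((FactBordered α 0 (N + 1)).ncard : ℝ) ≤ 2 ^ (N + 1) := by exact_mod_cast this
      have : (0 : ℝ) < 2 ^ (N + 1) := by positivity
      rw [pow_zero]; linarith
    rcases Nat.eq_zero_or_pos N with rfl | hN
    · have : FactBordered α K (0 + 1) = ∅ := by
        ext T
        simp only [Set.mem_empty_iff_false, iff_false]
        intro hT
        have := factBordered_lt (by omega) hT
        omega
      rw [this]; simp
    have hfin : (FactBordered α (K - 1) N).Finite := finite_of_length fun T hT => hT.1
    have hfin' : (PrefBordered α (fun p => p ≠ 2) K (N + 1)).Finite :=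
      finite_of_length fun T hT => hT.1
    have h1 : (FactBordered α K (N + 1)).ncard ≤
        (PrefBordered α (fun p => p ≠ 2) K (N + 1)).ncard + (FactBordered α (K - 1) N).ncard := by
      calc _ ≤ _ := Set.ncard_le_ncard (factBordered_subset f hf K N hK hN)
            (hfin'.union (hfin.image _))
        _ ≤ _ := Set.ncard_union_le _ _
        _ ≤ _ := Nat.add_le_add_left (Set.ncard_image_le hfin) _
    have h1' : ((FactBordered α K (N + 1)).ncard : ℝ) ≤
        (PrefBordered α (fun p => p ≠ 2) K (N + 1)).ncard + (FactBordered α (K - 1) N).ncard := by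
      exact_mod_cast h1
    have h2 := hY K (N + 1)
    have h3 := ih (K - 1) hN
    have hrK : r ^ K = r ^ (K - 1) * r := by rw [← pow_succ]; congr 1; omega
    have hp : (0 : ℝ) < 2 ^ N := by positivity
    calc ((FactBordered α K (N + 1)).ncard : ℝ) * r ^ K
        ≤ ((PrefBordered α (fun p => p ≠ 2) K (N + 1)).ncard + (FactBordered α (K - 1) N).ncard)
          * r ^ K := by gcongr
      _ = (PrefBordered α (fun p => p ≠ 2) K (N + 1)).ncard * r ^ K
          + (FactBordered α (K - 1) N).ncard * r ^ (K - 1) * r := by rw [hrK]; ring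
      _ ≤ 2 ^ (N + 1) + 4 * 2 ^ N * r := by gcongr
      _ ≤ 2 ^ (N + 1) + 4 * 2 ^ N * (9 / 8) := by gcongr; linarith
      _ ≤ 4 * 2 ^ (N + 1) := by rw [pow_succ]; linarith

theorem ncard_factBordered_three (α : Type*) [Fintype α] (hc : 3 ≤ Fintype.card α) (r : ℝ)
    (hr : 1 ≤ r) (hr2 : r / Fintype.card α ≤ 1 / 2) (N K : ℕ) (hN : 1 ≤ N) :
    ((FactBordered α K N).ncard : ℝ) * r ^ K ≤ (Fintype.card α : ℝ) ^ N := by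
  have hr0 : 0 < r := by linarith
  have hsum : ∀ M, ∑ p ∈ (Finset.Icc 1 M).filter (fun _ => True),
      (r / Fintype.card α) ^ p ≤ 1 := by
    intro M
    rw [Finset.filter_true]
    set x := r / Fintype.card α
    have hx : 0 ≤ x := by positivity
    have hI : Finset.Icc 1 M = (Finset.range M).image (fun i => i + 1) := by
      ext p
      simp only [Finset.mem_Icc, Finset.mem_image, Finset.mem_range]
      exact ⟨fun h => ⟨p - 1, by omega, by omega⟩, by rintro ⟨i, h, rfl⟩; omega⟩
    calc _ = x * ∑ i ∈ Finset.range M, x ^ i := by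
          rw [hI, Finset.sum_image (by simp), Finset.mul_sum]
          exact Finset.sum_congr rfl fun i _ => by ring
      _ ≤ 1 / 2 * ∑ i ∈ Finset.range M, (1 / 2 : ℝ) ^ i := by gcongr
      _ ≤ 1 / 2 * 2 := by
          gcongr
          exact sum_geometric_two_le M
      _ = 1 := by norm_num
  have hY := ncard_prefBordered_le α (fun _ => True) r hr (by omega) hsum K N
  refine le_trans ?_ hY
  gcongr
  · exact finite_of_length fun T hT => hT.1
  · intro T hT
    refine ⟨hT.1, fun j hj => ?_⟩
    obtain ⟨p, h⟩ := factBordered_take hN hT hj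
    exact ⟨p, trivial, h⟩

/-! ### Random words -/

theorem ofFn_mem_factBordered {α : Type*} {n K : ℕ} (S : Fin n → α)
    (h : K ≤ n - maxUnb (List.ofFn S)) (hK : 1 ≤ K) : List.ofFn S ∈ FactBordered α K n := by
  refine ⟨by simp, fun U h1 h2 h3 hU => ?_⟩
  have hbdd : BddAbove {k | ∃ T, T ≠ [] ∧ T <:+: List.ofFn S ∧ Unbordered T ∧ T.length = k} := by
    refine ⟨n, ?_⟩
    rintro k ⟨T, -, hT, -, rfl⟩
    simpa using hT.length_le
  have hle : U.length ≤ maxUnb (List.ofFn S) := le_csSup hbdd ⟨U, h1, h2, hU, rfl⟩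
  omega

/-- At most `4 σ ^ n / σ ^ (K / 8)` words of length `n` satisfy `n - L(S) ≥ K`. The exponent `1 / 8`
is small enough for `2 ^ (1 / 8) ≤ 9 / 8` and for `σ ^ (1 / 8) ≤ σ / 2` when `σ ≥ 3`. -/
theorem card_bad_le (α : Type*) [Fintype α] (hc : 2 ≤ Fintype.card α) (n K : ℕ) (hK : 1 ≤ K)
    (A : Finset (Fin n → α)) (hA : ∀ S ∈ A, K ≤ n - maxUnb (List.ofFn S)) :
    (A.card : ℝ) * ((Fintype.card α : ℝ) ^ (1 / 8 : ℝ)) ^ K ≤ 4 * (Fintype.card α : ℝ) ^ n := by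
  rcases Nat.eq_zero_or_pos n with rfl | hn
  · have : A = ∅ := by
      rw [Finset.eq_empty_iff_forall_notMem]
      intro S hS
      have := hA S hS
      omega
    rw [this]; simp
  have hcard : A.card ≤ (FactBordered α K n).ncard := by
    have hinj : Function.Injective (fun S : Fin n → α => List.ofFn S) := List.ofFn_injective
    rw [← Set.ncard_coe_finset, ← Set.ncard_image_of_injective _ hinj]
    refine Set.ncard_le_ncard ?_ (finite_of_length fun T hT => hT.1)
    rintro _ ⟨S, hS, rfl⟩
    exact ofFn_mem_factBordered S (hA S hS) hK
  set s : ℝ := (Fintype.card α : ℝ) with hs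
  have hs2 : (2 : ℝ) ≤ s := by rw [hs]; exact_mod_cast hc
  have hs0 : 0 < s := by linarith
  set r := s ^ (1 / 8 : ℝ) with hr
  have hr1 : 1 ≤ r := Real.one_le_rpow (by linarith) (by norm_num)
  have hr8 : r ^ 8 = s := by
    rw [hr, ← Real.rpow_natCast, ← Real.rpow_mul hs0.le]; norm_num
  have hcard' : (A.card : ℝ) ≤ (FactBordered α K n).ncard := by exact_mod_cast hcard
  refine le_trans (mul_le_mul_of_nonneg_right hcard' (by positivity)) ?_
  rcases hc.eq_or_lt with h2 | h3
  · have hs' : s = 2 := by rw [hs, ← h2]; norm_num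
    rw [hs']
    refine ncard_factBordered_two α h2.symm r hr1 ?_ n K hn
    have : r ≤ 9 / 8 := by
      refine le_of_pow_le_pow_left₀ (n := 8) (by norm_num) (by norm_num) ?_
      rw [hr8, hs']; norm_num
    linarith
  · have hs3 : (3 : ℝ) ≤ s := by rw [hs]; exact_mod_cast h3
    have := ncard_factBordered_three α h3 r hr1 ?_ n K hn
    · have : 0 < s ^ n := by positivity
      linarith
    · rw [← hs, div_le_iff₀ hs0]
      refine le_of_pow_le_pow_left₀ (n := 8) (by norm_num) (by positivity) ?_
      rw [hr8, mul_pow]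
      have : (3 : ℝ) ^ 7 ≤ s ^ 7 := by gcongr
      have h8 : s ^ 8 = s ^ 7 * s := by ring
      rw [h8]
      nlinarith

/-- there is an absolute constant `c > 0` such that for every alphabet of size
`σ ≥ 2`, every `n`, and every `0 < δ ≤ 1`, a uniformly random `S ∈ Σⁿ` satisfies
`n - L(S) ≤ c·(1 + log_σ(1/δ))` with probability at least `1 - δ`. -/
theorem whp_maxUnbordered : ∃ c : ℝ, 0 < c ∧
    ∀ (σ : ℕ), 2 ≤ σ → ∀ (Γ : Type) [Fintype Γ], Fintype.card Γ = σ →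
      ∀ n : ℕ, ∀ δ : ℝ, 0 < δ → δ ≤ 1 →
        1 - δ ≤ (((univ.filter fun S : Fin n → Γ =>
            ((n - maxUnb (List.ofFn S) : ℕ) : ℝ) ≤ c * (1 + Real.logb σ (1 / δ))).card : ℝ)) /
          (σ : ℝ) ^ n := by
  refine ⟨16, by norm_num, ?_⟩
  intro σ hσ Γ _ hΓ n δ hδ hδ1
  have hs2 : (2 : ℝ) ≤ σ := by exact_mod_cast hσ
  have hs0 : (0 : ℝ) < σ := by linarith
  set x : ℝ := 16 * (1 + Real.logb σ (1 / δ)) with hx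
  have hlog : 0 ≤ Real.logb σ (1 / δ) :=
    Real.logb_nonneg (by linarith) (by rw [le_div_iff₀ hδ]; linarith)
  have hx0 : 0 ≤ x := by positivity
  set K := ⌊x⌋₊ + 1 with hK
  have hxK : x ≤ K := by rw [hK]; push_cast; exact (Nat.lt_floor_add_one x).le
  have hbad := card_bad_le Γ (by omega) n K (by omega)
    (univ.filter fun S : Fin n → Γ => ¬ ((n - maxUnb (List.ofFn S) : ℕ) : ℝ) ≤ x) (by
      intro S hS
      rw [Finset.mem_filter] at hS
      exact Nat.succ_le_of_lt ((Nat.floor_lt hx0).2 (not_le.1 hS.2)))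
  rw [hΓ] at hbad
  have hsplit := Finset.card_filter_add_card_filter_not (s := (univ : Finset (Fin n → Γ)))
    (fun S : Fin n → Γ => ((n - maxUnb (List.ofFn S) : ℕ) : ℝ) ≤ x)
  rw [Finset.card_univ, Fintype.card_fun, Fintype.card_fin, hΓ] at hsplit
  set g := (univ.filter fun S : Fin n → Γ => ((n - maxUnb (List.ofFn S) : ℕ) : ℝ) ≤ x).card
  set b := (univ.filter fun S : Fin n → Γ => ¬ ((n - maxUnb (List.ofFn S) : ℕ) : ℝ) ≤ x).card
  have hsplit' : (g : ℝ) + b = (σ : ℝ) ^ n := by exact_mod_cast hsplit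
  have hrK : 4 / δ ≤ ((σ : ℝ) ^ (1 / 8 : ℝ)) ^ K := by
    rw [← Real.rpow_natCast, ← Real.rpow_mul hs0.le]
    have h1 : (σ : ℝ) ^ (2 + Real.logb σ (1 / δ)) ≤ (σ : ℝ) ^ (1 / 8 * (K : ℝ)) := by
      refine Real.rpow_le_rpow_of_exponent_le (by linarith) ?_
      linarith
    refine le_trans ?_ h1
    rw [Real.rpow_add hs0, Real.rpow_logb hs0 (by linarith) (by positivity), Real.rpow_two]
    rw [div_eq_mul_one_div]
    gcongr
    nlinarith
  have hb : (b : ℝ) ≤ δ * (σ : ℝ) ^ n := by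
    have h1 : (b : ℝ) * (4 / δ) ≤ 4 * (σ : ℝ) ^ n :=
      le_trans (mul_le_mul_of_nonneg_left hrK (by positivity)) hbad
    rw [mul_div_assoc', div_le_iff₀ hδ] at h1
    linarith
  rw [le_div_iff₀ (by positivity)]
  linarith
end

section
/- For every alphabet Σ of size σ ≥ 2, every n ∈ ℕ, and every real t with 0 < t ≤ 0.1·ln σ, if S ∈ Σⁿ is chosen uniformly at random, then E[n − L(S)] ≤ (C(t) − 1)/t, where C(t) = (σ³ − σ²e^{2t})/(σ³ − 2σ²e^{2t} + e^{4t}). -/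
/-!
The proof bounds the moment generating function `E[exp (t (n - L(S)))]` by `C(t)` and then uses
`1 + y ≤ exp y`.

If `S` is bordered, its shortest border `u` is unbordered and occupies at most half of `S`, so
`S = u v u`, and every unbordered factor of `v` is a factor of `S`; hence
`n - L(S) ≤ 2 |u| + (|v| - L(v))`. If `S` is unbordered then `n - L(S) = 0`. With `x = exp (2 t)`,
`u_k` the number of unbordered words of length `k`, and `A_n = ∑_S exp (t (n - L(S)))`, this gives
`A_n ≤ σ^n + ∑_{1 ≤ k ≤ n/2} u_k x^k A_{n-2k}` (`mgfSum_recursion`).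

Since an unbordered word of length `k ≥ 2` has different first and last letters,
`u_k ≤ σ^k - σ^(k-1)`, while `u_1 ≤ σ`. Therefore `∑_k u_k x^k / σ^(2k)` is at most
`G = (x/σ) (1 - x/σ²) / (1 - x/σ)`, and `C(t) = 1 / (1 - G)`. Strong induction then yields
`A_n ≤ C(t) σ^n`, because `1 + G C(t) = C(t)`. The hypothesis `t ≤ 0.1 ln σ` is what makes the
denominator of `C(t)` positive, i.e. `G < 1`.
-/

open Finset

namespace UnborderedMgf

/-! ### Borders and unbordered factors -/

section Words

variable {α : Type*}

lemma bddAbove_unb (S : List α) :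
    BddAbove {k | ∃ T, T ≠ [] ∧ T <:+: S ∧ Unbordered T ∧ T.length = k} := by
  refine ⟨S.length, ?_⟩
  rintro k ⟨T, -, hT, -, rfl⟩
  exact hT.length_le

lemma maxUnb_mono {v S : List α} (h : v <:+: S) : maxUnb v ≤ maxUnb S := by
  refine csSup_le' ?_
  rintro k ⟨T, h0, hT, hu, rfl⟩
  exact le_csSup (bddAbove_unb S) ⟨T, h0, hT.trans h, hu, rfl⟩

lemma length_le_maxUnb {S : List α} (h : Unbordered S) : S.length ≤ maxUnb S := by
  by_cases h0 : S = []
  · simp [h0]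
  · exact le_csSup (bddAbove_unb S) ⟨S, h0, List.infix_refl S, h, rfl⟩

/-- A border longer than half of the word overlaps itself, and the overlap is a shorter border. -/
lemma overlap_border {S : List α} {k : ℕ} (h : HasBorder S k) (hk : k < S.length)
    (h2 : S.length < 2 * k) : HasBorder S (2 * k - S.length) := by
  obtain ⟨h1, hle, he⟩ := h
  have key : ∀ i, i < k → S[i]? = S[i + (S.length - k)]? := by
    intro i hi
    have := congrArg (fun l => l[i]?) he
    simp only [List.getElem?_take, List.getElem?_drop, hi, if_true] at this
    rw [this, Nat.add_comm]
  refine ⟨by omega, by omega, ?_⟩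
  apply List.ext_getElem?
  intro i
  rw [List.getElem?_take, List.getElem?_drop]
  split_ifs with hi
  · rw [key i (by omega), key (i + (S.length - k)) (by omega)]
    congr 1
    omega
  · rw [List.getElem?_eq_none (by omega)]

/-- A bordered word has the form `u v u` with `u` nonempty and unbordered: take for `u` the
shortest border. -/
lemma exists_decomp {S : List α} (h : ¬ Unbordered S) :
    ∃ u v : List α, u ≠ [] ∧ Unbordered u ∧ S = u ++ (v ++ u) := by
  classical
  have hex : ∃ k, HasBorder S k ∧ k < S.length := by
    unfold Unbordered at h
    push Not at h
    obtain ⟨l, h1, h2⟩ := h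
    exact ⟨l, h2, h1⟩
  obtain ⟨hb, hlt⟩ := Nat.find_spec hex
  have hmin : ∀ m, HasBorder S m → Nat.find hex ≤ m := by
    intro m hm
    by_contra hlt'
    exact Nat.find_min hex (not_le.mp hlt') ⟨hm, by omega⟩
  generalize Nat.find hex = k at hb hlt hmin
  have h2 : 2 * k ≤ S.length := by
    by_contra hc
    have := hmin _ (overlap_border hb hlt (by omega))
    omega
  obtain ⟨h1, hle, he⟩ := hb
  have hlen : (S.take k).length = k := by simp [hle]
  refine ⟨S.take k, (S.drop k).take (S.length - 2 * k), ?_, ?_, ?_⟩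
  · intro h0
    rw [h0] at hlen
    simp at hlen
    omega
  · rintro l hl ⟨hl1, hl2, hle2⟩
    rw [hlen] at hl hl2 hle2
    have hb' : HasBorder S l := by
      refine ⟨hl1, by omega, ?_⟩
      rw [List.take_take, min_eq_left (by omega), he, List.drop_drop] at hle2
      rw [hle2]
      congr 1
      omega
    have := hmin l hb'
    omega
  · have e1 : S.drop k = (S.drop k).take (S.length - 2 * k) ++ S.take k := by
      conv_lhs => rw [← List.take_append_drop (S.length - 2 * k) (S.drop k)]
      rw [List.drop_drop, he]
      congr 2
      omega
    rw [← e1, List.take_append_drop]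

end Words

/-! ### Counting words -/

section Counting

variable {Γ : Type} [Fintype Γ]

open Classical in
/-- The finite set of all words of length `n`, as lists. -/
noncomputable def words (Γ : Type) [Fintype Γ] (n : ℕ) : Finset (List Γ) :=
  (Finset.univ : Finset (Fin n → Γ)).image List.ofFn

lemma mem_words {n : ℕ} {l : List Γ} : l ∈ words Γ n ↔ l.length = n := by
  simp only [words, Finset.mem_image, Finset.mem_univ, true_and]
  constructor
  · rintro ⟨f, rfl⟩
    simp
  · rintro rfl
    exact ⟨l.get, List.ofFn_get l⟩

lemma sum_words {M : Type*} [AddCommMonoid M] (n : ℕ) (f : List Γ → M) :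
    ∑ l ∈ words Γ n, f l = ∑ S : Fin n → Γ, f (List.ofFn S) := by
  classical
  unfold words
  rw [Finset.sum_image]
  exact fun a _ b _ h => List.ofFn_injective h

lemma card_words (n : ℕ) : (words Γ n).card = Fintype.card Γ ^ n := by
  rw [Finset.card_eq_sum_ones, sum_words]
  simp

open Classical in
/-- The finite set of unbordered words of length `k`. -/
noncomputable def unbWords (Γ : Type) [Fintype Γ] (k : ℕ) : Finset (List Γ) :=
  (words Γ k).filter Unbordered

lemma card_unbWords_le (k : ℕ) : (unbWords Γ k).card ≤ Fintype.card Γ ^ k := by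
  classical
  rw [← card_words]
  exact Finset.card_le_card (Finset.filter_subset _ _)

/-- The words of length `k + 2` with equal first and last letter are bordered, and there are
`σ ^ (k + 1)` of them. -/
lemma card_unbWords_add_le (k : ℕ) :
    (unbWords Γ (k + 2)).card + Fintype.card Γ ^ (k + 1) ≤ Fintype.card Γ ^ (k + 2) := by
  classical
  have himg : ((words Γ (k + 1)).image (fun l => l ++ l.take 1)).card
      = Fintype.card Γ ^ (k + 1) := by
    rw [Finset.card_image_of_injOn, card_words]
    intro a ha b hb hab
    have ha' := mem_words.mp ha
    have hb' := mem_words.mp hb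
    exact (List.append_inj hab (by rw [ha', hb'])).1
  rw [← himg, ← card_words (k + 2), ← Finset.card_union_of_disjoint]
  · apply Finset.card_le_card
    apply Finset.union_subset (Finset.filter_subset _ _)
    intro l hl
    obtain ⟨a, ha, rfl⟩ := Finset.mem_image.mp hl
    have := mem_words.mp ha
    rw [mem_words]
    simp [this]
  · rw [Finset.disjoint_left]
    intro l hl hl'
    obtain ⟨a, ha, rfl⟩ := Finset.mem_image.mp hl'
    have hlen := mem_words.mp ha
    have hlen' : (a ++ a.take 1).length = k + 2 := by simp [hlen]
    refine (Finset.mem_filter.mp hl).2 1 (by omega) ⟨le_rfl, by omega, ?_⟩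
    rw [List.take_append_of_le_length (by omega), hlen',
      List.drop_append_of_le_length (by omega), List.drop_eq_nil_of_le (by omega), List.nil_append]

end Counting

/-! ### The moment generating function -/

section Mgf

variable {Γ : Type}

/-- The weight `exp (t (|S| - L(S)))` of a word `S`. -/
noncomputable def weight (t : ℝ) (S : List Γ) : ℝ :=
  Real.exp (t * ((S.length : ℝ) - maxUnb S))

/-- The sum of the weights of all words of length `n`, which is `σ ^ n` times the moment
generating function of `n - L(S)` at `t`. -/
noncomputable def mgfSum (Γ : Type) [Fintype Γ] (t : ℝ) (n : ℕ) : ℝ :=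
  ∑ S ∈ words Γ n, weight t S

lemma weight_pos (t : ℝ) (S : List Γ) : 0 < weight t S := Real.exp_pos _

lemma weight_le_one {t : ℝ} (ht : 0 < t) {S : List Γ} (h : Unbordered S) : weight t S ≤ 1 := by
  unfold weight
  rw [Real.exp_le_one_iff]
  have : (S.length : ℝ) ≤ maxUnb S := by exact_mod_cast length_le_maxUnb h
  nlinarith

lemma weight_decomp {t : ℝ} (ht : 0 < t) (u v : List Γ) :
    weight t (u ++ (v ++ u)) ≤ Real.exp (2 * t) ^ u.length * weight t v := by
  unfold weight
  rw [← Real.exp_nat_mul, ← Real.exp_add, Real.exp_le_exp]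
  have h1 : (maxUnb v : ℝ) ≤ maxUnb (u ++ (v ++ u)) := by
    exact_mod_cast maxUnb_mono ⟨u, u, by simp⟩
  simp only [List.length_append, Nat.cast_add]
  nlinarith

/-- Splitting off the shortest border on both sides. -/
lemma mgfSum_recursion [Fintype Γ] {t : ℝ} (ht : 0 < t) (n : ℕ) :
    mgfSum Γ t n ≤ (Fintype.card Γ : ℝ) ^ n +
      ∑ k ∈ Finset.Icc 1 (n / 2),
        ((unbWords Γ k).card : ℝ) * Real.exp (2 * t) ^ k * mgfSum Γ t (n - 2 * k) := by
  classical
  unfold mgfSum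
  rw [← Finset.sum_filter_add_sum_filter_not (words Γ n) Unbordered]
  apply add_le_add
  · calc ∑ S ∈ (words Γ n).filter Unbordered, weight t S
        ≤ ∑ S ∈ (words Γ n).filter Unbordered, (1 : ℝ) :=
          Finset.sum_le_sum fun S hS => weight_le_one ht (Finset.mem_filter.mp hS).2
      _ = ((unbWords Γ n).card : ℝ) := by simp [unbWords]
      _ ≤ _ := by exact_mod_cast card_unbWords_le n
  · -- The bordered words are covered by the images of the triples `(k, u, v)` under `u v u`.
    let T := (Finset.Icc 1 (n / 2)).sigma (fun k => unbWords Γ k ×ˢ words Γ (n - 2 * k))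
    let φ : (Σ _ : ℕ, List Γ × List Γ) → List Γ := fun p => p.2.1 ++ (p.2.2 ++ p.2.1)
    have hsub : (words Γ n).filter (fun S => ¬ Unbordered S) ⊆ T.image φ := by
      intro S hS
      obtain ⟨hS1, hS2⟩ := Finset.mem_filter.mp hS
      obtain ⟨u, v, hu0, hu, rfl⟩ := exists_decomp hS2
      have hlen := mem_words.mp hS1
      simp only [List.length_append] at hlen
      have hpos := List.length_pos_iff.mpr hu0
      refine Finset.mem_image.mpr ⟨⟨u.length, u, v⟩, ?_, rfl⟩
      simp only [T, Finset.mem_sigma, Finset.mem_Icc, Finset.mem_product, unbWords,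
        Finset.mem_filter, mem_words]
      exact ⟨by omega, ⟨trivial, hu⟩, by omega⟩
    calc ∑ S ∈ (words Γ n).filter (fun S => ¬ Unbordered S), weight t S
        ≤ ∑ S ∈ T.image φ, weight t S :=
          Finset.sum_le_sum_of_subset_of_nonneg hsub fun S _ _ => (weight_pos t S).le
      _ ≤ ∑ p ∈ T, weight t (φ p) :=
          Finset.sum_image_le_of_nonneg fun S _ => (weight_pos t S).le
      _ ≤ ∑ p ∈ T, Real.exp (2 * t) ^ p.1 * weight t p.2.2 := by
          refine Finset.sum_le_sum fun p hp => ?_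
          have hp1 : p.2.1.length = p.1 := by
            have := (Finset.mem_product.mp (Finset.mem_sigma.mp hp).2).1
            exact mem_words.mp (Finset.mem_filter.mp this).1
          rw [← hp1]
          exact weight_decomp ht _ _
      _ = _ := by
          rw [Finset.sum_sigma]
          refine Finset.sum_congr rfl fun k _ => ?_
          rw [Finset.sum_product]
          simp only [← Finset.mul_sum, Finset.sum_const, nsmul_eq_mul]
          ring

end Mgf

/-! ### Real estimates -/

/-- The denominator of `C(t)` is positive for `x ≤ σ ^ (1/5)`. -/
lemma denom_pos {s x : ℝ} (hs : 2 ≤ s) (hx : x ^ 5 ≤ s) :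
    0 < s ^ 3 - 2 * s ^ 2 * x + x ^ 2 := by
  -- Put `s = y ^ 5`; then `x ≤ y`, and the expression decreases in `x` for `x ≤ s ^ 2`.
  obtain ⟨y, hy0, hy⟩ : ∃ y : ℝ, 0 ≤ y ∧ y ^ 5 = s :=
    ⟨s ^ ((5 : ℕ) : ℝ)⁻¹, by positivity, Real.rpow_inv_natCast_pow (by linarith) (by norm_num)⟩
  have hxy : x ≤ y := by
    rw [← hy] at hx
    exact le_of_pow_le_pow_left₀ (by norm_num) hy0 hx
  have hyc : 1.148 ≤ y := by
    refine le_of_pow_le_pow_left₀ (n := 5) (by norm_num) hy0 ?_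
    rw [hy]
    norm_num at *
    linarith
  have hys : y ≤ s := by
    rw [← hy]
    exact le_self_pow₀ (by linarith) (by norm_num)
  have hmono : s ^ 3 - 2 * s ^ 2 * y + y ^ 2 ≤ s ^ 3 - 2 * s ^ 2 * x + x ^ 2 := by
    have : x + y ≤ 2 * s ^ 2 := by nlinarith
    nlinarith
  have hpoly : 0 < y ^ 13 - 2 * y ^ 9 + 1 := by
    -- All Taylor coefficients of this polynomial at `1.148` are positive.
    obtain ⟨z, hz⟩ : ∃ z, y = 1.148 + z := ⟨y - 1.148, by ring⟩
    have hz0 : 0 ≤ z := by linarith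
    rw [hz]
    ring_nf
    positivity
  have : s ^ 3 - 2 * s ^ 2 * y + y ^ 2 = y ^ 2 * (y ^ 13 - 2 * y ^ 9 + 1) := by
    rw [← hy]
    ring
  have : 0 < y ^ 2 * (y ^ 13 - 2 * y ^ 9 + 1) := by positivity
  linarith

/-- A closed form for the partial sums of `q + (1 - 1/s) (q² + q³ + ⋯)`, where the sequence `b`
encodes the summands. -/
lemma partial_sum {s q : ℝ} (hq : q < 1) (b : ℕ → ℝ) (b1 : b 1 = q)
    (b2 : ∀ k, b (k + 2) = (1 - 1 / s) * q ^ (k + 2)) (m : ℕ) :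
    ∑ k ∈ Finset.Icc 1 (m + 1), b k =
      q * (1 - q / s) / (1 - q) - (1 - 1 / s) * q ^ (m + 2) / (1 - q) := by
  have hq' : 1 - q ≠ 0 := by linarith
  induction m with
  | zero =>
    simp only [zero_add, Finset.Icc_self, Finset.sum_singleton, b1]
    field_simp
    ring
  | succ m ih =>
    rw [Finset.sum_Icc_succ_top (by omega), ih, b2]
    field_simp
    ring

section Main

variable {Γ : Type} [Fintype Γ]

/-- The weighted count of possible shortest borders is at most `G = q (1 - q/s) / (1 - q)`, where
`q = x / s`. -/
lemma border_sum_le {s x : ℝ} (hs : 2 ≤ s) (hcard : (Fintype.card Γ : ℝ) = s)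
    (hx : 0 < x) (hxs : x < s) (m : ℕ) :
    ∑ k ∈ Finset.Icc 1 m, ((unbWords Γ k).card : ℝ) * x ^ k / s ^ (2 * k) ≤
      x / s * (1 - x / s / s) / (1 - x / s) := by
  have hs0 : 0 < s := by linarith
  have hq0 : 0 < x / s := by positivity
  have hq : x / s < 1 := by rwa [div_lt_one hs0]
  have hqs : x / s / s < 1 := by
    rw [div_lt_one hs0]
    linarith
  have h1s : 0 ≤ 1 - 1 / s := by
    rw [sub_nonneg, div_le_one hs0]
    linarith
  rcases m with _ | m
  · simp only [Finset.Icc_eq_empty_of_lt, zero_lt_one, Finset.sum_empty]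
    have h2 : 0 ≤ 1 - x / s / s := by linarith
    have h3 : 0 ≤ 1 - x / s := by linarith
    positivity
  let b : ℕ → ℝ := fun k => if k = 1 then x / s else (1 - 1 / s) * (x / s) ^ k
  calc ∑ k ∈ Finset.Icc 1 (m + 1), ((unbWords Γ k).card : ℝ) * x ^ k / s ^ (2 * k)
      ≤ ∑ k ∈ Finset.Icc 1 (m + 1), b k := by
        refine Finset.sum_le_sum fun k hk => ?_
        obtain ⟨hk1, -⟩ := Finset.mem_Icc.mp hk
        rw [div_le_iff₀ (by positivity)]
        rcases k with _ | _ | k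
        · omega
        · have h : ((unbWords Γ 1).card : ℝ) ≤ s := by
            rw [← hcard]
            exact_mod_cast (card_unbWords_le (Γ := Γ) 1).trans_eq (pow_one _)
          have e : x / s * s ^ 2 = s * x := by field_simp
          simpa [b, e] using mul_le_mul_of_nonneg_right h hx.le
        · have h : ((unbWords Γ (k + 2)).card : ℝ) ≤ s ^ (k + 2) - s ^ (k + 1) := by
            have := card_unbWords_add_le (Γ := Γ) k
            have h' : ((unbWords Γ (k + 2)).card : ℝ) + s ^ (k + 1) ≤ s ^ (k + 2) := by
              rw [← hcard]
              exact_mod_cast this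
            linarith
          have e : b (k + 2) * s ^ (2 * (k + 2)) = (s ^ (k + 2) - s ^ (k + 1)) * x ^ (k + 2) := by
            have : b (k + 2) = (1 - 1 / s) * (x / s) ^ (k + 2) := by simp [b]
            rw [this, div_pow]
            field_simp
            ring
          have := mul_le_mul_of_nonneg_right h (pow_nonneg hx.le (k + 2))
          exact this.trans_eq e.symm
    _ = x / s * (1 - x / s / s) / (1 - x / s)
          - (1 - 1 / s) * (x / s) ^ (m + 2) / (1 - x / s) :=
        partial_sum hq b (by simp [b]) (fun k => by simp [b]) m
    _ ≤ _ := by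
        have h3 : 0 < 1 - x / s := by linarith
        have : 0 ≤ (1 - 1 / s) * (x / s) ^ (m + 2) / (1 - x / s) := by positivity
        linarith

/-- The moment generating function of `n - L(S)` at `t` is at most `C(t)`. -/
lemma mgfSum_le {t s : ℝ} (ht : 0 < t) (hs : 2 ≤ s) (hcard : (Fintype.card Γ : ℝ) = s)
    (hxs : Real.exp (2 * t) < s)
    (hD : 0 < s ^ 3 - 2 * s ^ 2 * Real.exp (2 * t) + Real.exp (2 * t) ^ 2) (n : ℕ) :
    mgfSum Γ t n ≤ (s ^ 3 - s ^ 2 * Real.exp (2 * t)) /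
      (s ^ 3 - 2 * s ^ 2 * Real.exp (2 * t) + Real.exp (2 * t) ^ 2) * s ^ n := by
  have hrec := fun n => mgfSum_recursion (Γ := Γ) ht n
  have hx := Real.exp_pos (2 * t)
  generalize Real.exp (2 * t) = x at *
  have hs0 : 0 < s := by linarith
  set C := (s ^ 3 - s ^ 2 * x) / (s ^ 3 - 2 * s ^ 2 * x + x ^ 2) with hC
  have hC0 : 0 ≤ C := by
    refine div_nonneg ?_ hD.le
    have : s ^ 3 - s ^ 2 * x = s ^ 2 * (s - x) := by ring
    rw [this]
    exact mul_nonneg (by positivity) (by linarith)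
  -- The renewal identity that characterises `C`.
  have hfix : 1 + C * (x / s * (1 - x / s / s) / (1 - x / s)) = C := by
    have hne : s - x ≠ 0 := by linarith
    have hG : x / s * (1 - x / s / s) / (1 - x / s) = (s ^ 2 * x - x ^ 2) / (s ^ 2 * (s - x)) := by
      have : 1 - x / s = (s - x) / s := by field_simp
      rw [this]
      field_simp
    rw [hG, hC]
    have hD' := hD.ne'
    have hn : s ^ 3 - s ^ 2 * x = s ^ 2 * (s - x) := by ring
    rw [hn, div_mul_div_comm, mul_comm (s ^ 3 - 2 * s ^ 2 * x + x ^ 2),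
      mul_div_mul_left _ _ (mul_ne_zero (by positivity) hne), eq_div_iff hD', add_mul,
      div_mul_cancel₀ _ hD']
    ring
  induction n using Nat.strong_induction_on with
  | _ n ih =>
    calc mgfSum Γ t n
        ≤ s ^ n + ∑ k ∈ Finset.Icc 1 (n / 2),
          ((unbWords Γ k).card : ℝ) * x ^ k * mgfSum Γ t (n - 2 * k) := by
            simpa only [hcard] using hrec n
      _ ≤ s ^ n + ∑ k ∈ Finset.Icc 1 (n / 2),
          C * s ^ n * (((unbWords Γ k).card : ℝ) * x ^ k / s ^ (2 * k)) := by
            refine add_le_add le_rfl (Finset.sum_le_sum fun k hk => ?_)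
            obtain ⟨hk1, hk2⟩ := Finset.mem_Icc.mp hk
            have h := mul_le_mul_of_nonneg_left (ih (n - 2 * k) (by omega))
              (a := ((unbWords Γ k).card : ℝ) * x ^ k) (by positivity)
            refine h.trans_eq ?_
            have : s ^ n = s ^ (n - 2 * k) * s ^ (2 * k) := by
              rw [← pow_add]
              congr 1
              omega
            rw [this]
            field_simp
      _ ≤ s ^ n + C * s ^ n * (x / s * (1 - x / s / s) / (1 - x / s)) := by
            rw [← Finset.mul_sum]
            gcongr
            exact border_sum_le hs hcard hx hxs _
      _ = (1 + C * (x / s * (1 - x / s / s) / (1 - x / s))) * s ^ n := by ring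
      _ = C * s ^ n := by rw [hfix]

end Main

end UnborderedMgf

open UnborderedMgf

/-- for a uniformly random `S ∈ Σⁿ` over an alphabet of size `σ ≥ 2` and every
`0 < t ≤ 0.1 ln σ`, we have `E[n - L(S)] ≤ (C(t) - 1)/t`. -/
theorem expected_le_mgf (σ : ℕ) (hσ : 2 ≤ σ) (Γ : Type) [Fintype Γ]
    (hcard : Fintype.card Γ = σ) (n : ℕ) (t : ℝ)
    (ht0 : 0 < t) (ht1 : t ≤ 0.1 * Real.log σ) :
    (∑ S : Fin n → Γ, ((n : ℝ) - (maxUnb (List.ofFn S) : ℝ))) / (σ : ℝ) ^ n ≤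
      (((σ : ℝ) ^ 3 - (σ : ℝ) ^ 2 * Real.exp (2 * t)) /
          ((σ : ℝ) ^ 3 - 2 * (σ : ℝ) ^ 2 * Real.exp (2 * t) + Real.exp (4 * t)) - 1) / t := by
  have hs : (2 : ℝ) ≤ σ := by exact_mod_cast hσ
  have hs0 : (0 : ℝ) < σ := by linarith
  have hx1 : 1 ≤ Real.exp (2 * t) := Real.one_le_exp (by linarith)
  have hx5 : Real.exp (2 * t) ^ 5 ≤ σ := by
    rw [← Real.exp_nat_mul, ← Real.le_log_iff_exp_le hs0]
    norm_num at *
    linarith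
  have hxs : Real.exp (2 * t) < σ := by
    by_contra hc
    have h2 : 2 ≤ Real.exp (2 * t) := by linarith
    have : Real.exp (2 * t) < Real.exp (2 * t) ^ 5 := lt_self_pow₀ (by linarith) (by norm_num)
    linarith
  have h4 : Real.exp (4 * t) = Real.exp (2 * t) ^ 2 := by
    rw [← Real.exp_nat_mul]
    congr 1
    push_cast
    ring
  have hD := denom_pos hs hx5
  have hM := mgfSum_le (Γ := Γ) ht0 hs (by rw [hcard]) hxs hD n
  rw [h4]
  rw [le_div_iff₀ ht0, div_mul_eq_mul_div, div_le_iff₀ (by positivity), sub_mul, one_mul]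
  refine le_trans ?_ (sub_le_sub_right hM _)
  have hN : ((σ : ℝ)) ^ n = ∑ S : Fin n → Γ, (1 : ℝ) := by simp [hcard]
  rw [mgfSum, sum_words, hN, ← Finset.sum_sub_distrib, Finset.sum_mul]
  refine Finset.sum_le_sum fun S _ => ?_
  have := Real.add_one_le_exp (t * (((List.ofFn S).length : ℝ) - maxUnb (List.ofFn S)))
  simp only [weight]
  rw [List.length_ofFn] at *
  linarith
end

section
/- Let Σ be an alphabet of size σ ≥ 2, let n ≥ 2, and let S ∈ Σⁿ be chosen uniformly at random. Then P[F(S) = 1] ≤ σ^{-1}, and for every integer ℓ with 2 ≤ ℓ ≤ n/2, P[F(S) = ℓ] ≤ (σ − 1)·σ^{−ℓ−1}. -/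
/-!
If `F(S) = ℓ` with `2ℓ ≤ n`, then the last `ℓ` letters of `S` repeat the first `ℓ`, and these two
blocks do not overlap; hence `S` is determined by its prefix of length `n - ℓ`
(`eq_of_prefix_eq`). This gives at most `σ ^ (n - 1)` strings when `ℓ = 1`. When `ℓ ≥ 2`,
minimality of `ℓ` excludes a border of length one, so the first letter of `S` differs from the last
letter, which is the letter at (0-based) position `ℓ - 1`. The prefix of length `n - ℓ` thus has
different letters at the two distinct positions `0` and `ℓ - 1`, and there are only
`(σ - 1) σ ^ (n - ℓ - 1)` such words (`card_ne_add_le`).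
-/

open Finset

theorem hasBorder_ofFn_iff {Γ : Type} {n : ℕ} (S : Fin n → Γ) (ℓ : ℕ) :
    HasBorder (List.ofFn S) ℓ ↔ 1 ≤ ℓ ∧ ∃ h : ℓ ≤ n, ∀ i (hi : i < ℓ),
      S ⟨i, by omega⟩ = S ⟨n - ℓ + i, by omega⟩ := by
  unfold HasBorder
  rw [List.length_ofFn]
  constructor
  · rintro ⟨h1, h2, h3⟩
    refine ⟨h1, h2, fun i hi => ?_⟩
    have h4 := congrArg (fun L => L[i]?) h3
    have e1 : i < n := by omega
    have e2 : n - ℓ + i < n := by omega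
    simpa [List.getElem?_take, List.getElem?_drop, List.getElem?_ofFn, hi, e1, e2] using h4
  · rintro ⟨h1, h2, h3⟩
    refine ⟨h1, h2, ?_⟩
    apply List.ext_getElem
    · simp; omega
    · intro i hi hi'
      simp at hi
      simpa using h3 i hi.1

theorem hasBorder_of_borderF_eq {α : Type*} {L : List α} {ℓ : ℕ} (hℓ : 1 ≤ ℓ)
    (h : borderF L = ℓ) : HasBorder L ℓ := by
  have hne : {k | HasBorder L k}.Nonempty :=
    Nat.nonempty_of_pos_sInf (by unfold borderF at h; omega)
  have := Nat.sInf_mem hne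
  unfold borderF at h
  rwa [h] at this

/-- A string with a border of length at most half its length is determined by the prefix obtained
by deleting that border from the end. -/
theorem eq_of_prefix_eq {Γ : Type} {n ℓ : ℕ} (h2 : 2 * ℓ ≤ n) {S T : Fin n → Γ}
    (hS : HasBorder (List.ofFn S) ℓ) (hT : HasBorder (List.ofFn T) ℓ)
    (h : ∀ i : Fin (n - ℓ), S (i.castLE (Nat.sub_le n ℓ)) = T (i.castLE (Nat.sub_le n ℓ))) :
    S = T := by
  obtain ⟨_, _, hS'⟩ := (hasBorder_ofFn_iff S ℓ).1 hS
  obtain ⟨_, _, hT'⟩ := (hasBorder_ofFn_iff T ℓ).1 hT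
  funext ⟨i, hi⟩
  by_cases hlt : i < n - ℓ
  · exact h ⟨i, hlt⟩
  · have a := hS' (i - (n - ℓ)) (by omega)
    have b := hT' (i - (n - ℓ)) (by omega)
    have c := h ⟨i - (n - ℓ), by omega⟩
    have e : n - ℓ + (i - (n - ℓ)) = i := by omega
    simp only [e] at a b
    rw [← a, ← b]
    exact c

/-- Equivalently, at most `(σ - 1) σ ^ k` words of length `k + 1` have different letters at the
positions `0` and `j + 1`. -/
theorem card_ne_add_le {Γ : Type} [Fintype Γ] [DecidableEq Γ] (k : ℕ) (j : Fin k) :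
    #{T : Fin (k + 1) → Γ | T 0 ≠ T j.succ} + Fintype.card Γ ^ k ≤ Fintype.card Γ ^ (k + 1) := by
  have htot := card_filter_add_card_filter_not (s := (univ : Finset (Fin (k + 1) → Γ)))
    (fun T => T 0 = T j.succ)
  -- A word of length `k` extends on the left by a copy of its letter at `j`.
  have hle : #(univ : Finset (Fin k → Γ)) ≤ #{T : Fin (k + 1) → Γ | T 0 = T j.succ} := by
    refine card_le_card_of_injOn (fun T => Fin.cons (T j) T) (fun T _ => by simp) ?_
    intro T _ T' _ h
    exact (Fin.cons_inj.1 h).2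
  simp only [card_univ, Fintype.card_fun, Fintype.card_fin] at htot hle
  simp only [ne_eq]
  omega

theorem card_borderF_eq_one_le {Γ : Type} [Fintype Γ] (n : ℕ) (hn : 2 ≤ n) :
    #{S : Fin n → Γ | borderF (List.ofFn S) = 1} ≤ Fintype.card Γ ^ (n - 1) := by
  have : #{S : Fin n → Γ | borderF (List.ofFn S) = 1} ≤
      #(univ : Finset (Fin (n - 1) → Γ)) := by
    refine card_le_card_of_injOn (fun S i => S (i.castLE (Nat.sub_le n 1))) (by simp) ?_
    intro S hS T hT h
    simp only [coe_filter, mem_univ, true_and, Set.mem_ofPred_eq] at hS hT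
    exact eq_of_prefix_eq (by omega) (hasBorder_of_borderF_eq le_rfl hS)
      (hasBorder_of_borderF_eq le_rfl hT) (congrFun h)
  simpa using this

theorem card_borderF_eq_add_le {Γ : Type} [Fintype Γ] (n ℓ : ℕ) (hℓ : 2 ≤ ℓ) (h2 : 2 * ℓ ≤ n) :
    #{S : Fin n → Γ | borderF (List.ofFn S) = ℓ} + Fintype.card Γ ^ (n - ℓ - 1) ≤
      Fintype.card Γ ^ (n - ℓ) := by
  classical
  obtain ⟨k, hk⟩ : ∃ k, n - ℓ = k + 1 := ⟨n - ℓ - 1, by omega⟩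
  have hkn : k + 1 ≤ n := by omega
  -- The letter at position `ℓ - 1 = (ℓ - 2) + 1` is the last letter of the border.
  have key : #{S : Fin n → Γ | borderF (List.ofFn S) = ℓ} ≤
      #{T : Fin (k + 1) → Γ | T 0 ≠ T (Fin.succ ⟨ℓ - 2, by omega⟩)} := by
    refine card_le_card_of_injOn (fun S i => S (i.castLE hkn)) ?_ ?_
    · intro S hS
      simp only [coe_filter, mem_univ, true_and, Set.mem_ofPred_eq] at hS ⊢
      intro h0
      obtain ⟨_, _, hb⟩ :=
        (hasBorder_ofFn_iff S ℓ).1 (hasBorder_of_borderF_eq (by omega) hS)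
      have hlast := hb (ℓ - 1) (by omega)
      have h1 : HasBorder (List.ofFn S) 1 := by
        refine (hasBorder_ofFn_iff S 1).2 ⟨le_rfl, by omega, fun i hi => ?_⟩
        obtain rfl : i = 0 := by omega
        have e1 : n - ℓ + (ℓ - 1) = n - 1 + 0 := by omega
        have e2 : ℓ - 1 = ℓ - 2 + 1 := by omega
        simp only [e1] at hlast
        rw [← hlast]
        simp only [e2]
        exact h0
      have : borderF (List.ofFn S) ≤ 1 := Nat.sInf_le h1
      omega
    · intro S hS T hT h
      simp only [coe_filter, mem_univ, true_and, Set.mem_ofPred_eq] at hS hT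
      refine eq_of_prefix_eq h2 (hasBorder_of_borderF_eq (by omega) hS)
        (hasBorder_of_borderF_eq (by omega) hT) fun i => ?_
      exact congrFun h (i.cast hk)
  have := card_ne_add_le (Γ := Γ) k ⟨ℓ - 2, by omega⟩
  rw [hk, Nat.add_sub_cancel]
  omega

/-- for uniformly random `S ∈ Σⁿ` with `σ ≥ 2` and `n ≥ 2`,
`P[F(S) = 1] ≤ σ⁻¹`, and `P[F(S) = ℓ] ≤ (σ - 1)·σ^{-ℓ-1}` for every `2 ≤ ℓ ≤ n/2`. -/
theorem shortest_border_probability (σ : ℕ) (hσ : 2 ≤ σ) (Γ : Type) [Fintype Γ]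
    (hcard : Fintype.card Γ = σ) (n : ℕ) (hn : 2 ≤ n) :
    (((univ.filter fun S : Fin n → Γ => borderF (List.ofFn S) = 1).card : ℝ)) / (σ : ℝ) ^ n ≤
      (σ : ℝ)⁻¹ ∧
    ∀ ℓ : ℕ, 2 ≤ ℓ → 2 * ℓ ≤ n →
      (((univ.filter fun S : Fin n → Γ => borderF (List.ofFn S) = ℓ).card : ℝ)) / (σ : ℝ) ^ n ≤
        ((σ : ℝ) - 1) * (σ : ℝ) ^ (-(ℓ : ℤ) - 1) := by
  have hpos : (0 : ℝ) < σ := by exact_mod_cast (by omega : 0 < σ)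
  subst hcard
  refine ⟨?_, fun ℓ hℓ h2 => ?_⟩
  · have h : (#{S : Fin n → Γ | borderF (List.ofFn S) = 1} : ℝ) ≤
        (Fintype.card Γ : ℝ) ^ (n - 1) := by
      exact_mod_cast card_borderF_eq_one_le n hn
    obtain ⟨m, rfl⟩ : ∃ m, n = m + 1 := ⟨n - 1, by omega⟩
    rw [div_le_iff₀ (by positivity), pow_succ', inv_mul_cancel_left₀ hpos.ne']
    exact h
  · have h : (#{S : Fin n → Γ | borderF (List.ofFn S) = ℓ} : ℝ) +
        (Fintype.card Γ : ℝ) ^ (n - ℓ - 1) ≤ (Fintype.card Γ : ℝ) ^ (n - ℓ) := by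
      exact_mod_cast card_borderF_eq_add_le n ℓ hℓ h2
    obtain ⟨m, rfl⟩ : ∃ m, n = m + (ℓ + 1) := ⟨n - ℓ - 1, by omega⟩
    have e1 : m + (ℓ + 1) - ℓ = m + 1 := by omega
    rw [e1, Nat.add_sub_cancel, pow_succ] at h
    have e2 : -(ℓ : ℤ) - 1 = -((ℓ + 1 : ℕ) : ℤ) := by push_cast; ring
    rw [div_le_iff₀ (by positivity), e2, zpow_neg, zpow_natCast, mul_assoc, pow_add _ m,
      mul_comm ((Fintype.card Γ : ℝ) ^ m), inv_mul_cancel_left₀ (by positivity)]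
    linarith
end

section
/- Let Σ be an alphabet of size σ ≥ 2, let n ≥ 2, let 1 ≤ ℓ ≤ n/2, and let S ∈ Σⁿ be chosen uniformly at random. Then, conditioned on the event F(S) = ℓ (assuming it has positive probability), the middle factor S[ℓ+1, n−ℓ] is uniformly distributed on Σ^{n−2ℓ}; in particular, for every t ≥ 0, E[e^{t·(n − L(S))} | F(S) = ℓ] ≤ e^{2tℓ}·E[e^{t·(m − L(T))}], where m = n − 2ℓ and T is uniformly random in Σᵐ. -/
/-!
For `2ℓ ≤ n`, a string `S` of length `n` satisfies `F(S) = ℓ` exactly when `S = u w u` with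
`|u| = ℓ` and `u` unbordered: a border of `u w u` shorter than `u` is the same thing as a border
of `u` (`borderF_sandwich`, `exists_sandwich`). The condition does not involve `w`, so the event
`F(S) = ℓ` is in bijection with pairs (unbordered `u`, arbitrary `w`). Hence any function of the
middle factor sums over the event to `N` times its sum over all `w`, where `N` is the number of
unbordered strings of length `ℓ` (`sum_middle`). Constant functions and indicators give uniformity
of the middle factor. The exponential bound follows because every factor of `w` is a factor of
`u w u`, so `L(w) ≤ L(u w u)`.
-/

open Finset

lemma borderF_eq_iff {α : Type*} (S : List α) (ℓ : ℕ) (hℓ : 1 ≤ ℓ) :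
    borderF S = ℓ ↔ HasBorder S ℓ ∧ ∀ k, k < ℓ → ¬ HasBorder S k := by
  unfold borderF
  constructor
  · intro h
    have hne : {k | HasBorder S k}.Nonempty := Nat.nonempty_of_pos_sInf (by omega)
    refine ⟨?_, fun k hk => ?_⟩
    · have := Nat.sInf_mem hne
      rwa [h] at this
    · exact Nat.notMem_of_lt_sInf (s := {k | HasBorder S k}) (by omega)
  · rintro ⟨h1, h2⟩
    refine le_antisymm (Nat.sInf_le h1) ?_
    by_contra! hlt
    exact h2 _ hlt (Nat.sInf_mem (s := {k | HasBorder S k}) ⟨ℓ, h1⟩)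

/-- The borders of `u w u` of length at most `|u|` are the borders of `u`. -/
lemma hasBorder_sandwich {α : Type*} (u w : List α) (k : ℕ) (hk : k ≤ u.length) :
    HasBorder (u ++ w ++ u) k ↔ HasBorder u k := by
  have h1 : (u ++ w ++ u).take k = u.take k := by
    rw [List.append_assoc, List.take_append_of_le_length hk]
  have h2 : (u ++ w ++ u).drop ((u ++ w ++ u).length - k) = u.drop (u.length - k) := by
    have : (u ++ w ++ u).length - k = (u ++ w).length + (u.length - k) := by
      simp only [List.length_append]; omega
    rw [this, List.drop_length_add_append]
  unfold HasBorder
  rw [h1, h2]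
  simp only [List.length_append]
  constructor
  · rintro ⟨a, _, c⟩
    exact ⟨a, hk, c⟩
  · rintro ⟨a, _, c⟩
    exact ⟨a, by omega, c⟩

lemma borderF_sandwich {α : Type*} (u w : List α) (hu : 1 ≤ u.length) :
    borderF (u ++ w ++ u) = u.length ↔ Unbordered u := by
  rw [borderF_eq_iff _ _ hu, hasBorder_sandwich u w _ le_rfl]
  constructor
  · rintro ⟨_, h⟩ k hk hb
    exact h k hk ((hasBorder_sandwich u w k hk.le).2 hb)
  · intro h
    exact ⟨⟨hu, le_rfl, by simp⟩, fun k hk hb => h k hk ((hasBorder_sandwich u w k hk.le).1 hb)⟩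

lemma exists_sandwich {α : Type*} (S : List α) (ℓ : ℕ) (h2 : 2 * ℓ ≤ S.length)
    (hb : HasBorder S ℓ) :
    S = S.take ℓ ++ (S.drop ℓ).take (S.length - 2 * ℓ) ++ S.take ℓ := by
  obtain ⟨_, _, h⟩ := hb
  have e : (S.drop ℓ).drop (S.length - 2 * ℓ) = S.take ℓ := by
    rw [List.drop_drop, h]
    congr 1
    omega
  conv_lhs => rw [← List.take_append_drop ℓ S, ← List.take_append_drop (S.length - 2 * ℓ) (S.drop ℓ)]
  rw [e, List.append_assoc]

lemma middle_sandwich {α : Type*} (u w : List α) :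
    ((u ++ w ++ u).drop u.length).take w.length = w := by
  simp

lemma maxUnb_le_of_infix {α : Type*} {T S : List α} (h : T <:+: S) : maxUnb T ≤ maxUnb S := by
  unfold maxUnb
  rcases Set.eq_empty_or_nonempty {k | ∃ R, R ≠ [] ∧ R <:+: T ∧ Unbordered R ∧ R.length = k}
    with he | hne
  · rw [he]
    simp
  · refine csSup_le_csSup ⟨S.length, ?_⟩ hne ?_
    · rintro k ⟨R, _, hR, _, rfl⟩
      exact hR.length_le
    · rintro k ⟨R, h0, hR, h1, h2⟩
      exact ⟨R, h0, hR.trans h, h1, h2⟩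

/-- The string `u w u` as a function on `Fin n`, where `n = 2ℓ + (n - 2ℓ)`. -/
def sandwich {Γ : Type} {n ℓ : ℕ} (hℓ2 : 2 * ℓ ≤ n)
    (p : (Fin ℓ → Γ) × (Fin (n - 2 * ℓ) → Γ)) : Fin n → Γ := fun k =>
  (List.ofFn p.1 ++ List.ofFn p.2 ++ List.ofFn p.1)[k.1]'(by
    have := k.2
    simp only [List.length_append, List.length_ofFn]
    omega)

lemma ofFn_sandwich {Γ : Type} {n ℓ : ℕ} (hℓ2 : 2 * ℓ ≤ n)
    (p : (Fin ℓ → Γ) × (Fin (n - 2 * ℓ) → Γ)) :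
    List.ofFn (sandwich hℓ2 p) = List.ofFn p.1 ++ List.ofFn p.2 ++ List.ofFn p.1 := by
  apply List.ext_getElem
  · simp only [List.length_append, List.length_ofFn]
    omega
  · intro i h1 h2
    rw [List.getElem_ofFn]
    rfl

lemma exists_ofFn_eq {α : Type*} (l : List α) (k : ℕ) (h : l.length = k) :
    ∃ f : Fin k → α, List.ofFn f = l := by
  subst h
  exact ⟨l.get, List.ofFn_get l⟩

open Classical in
/-- Summing a function of the middle factor over the event `F(S) = ℓ` gives the number of
unbordered strings of length `ℓ` times the sum over all possible middle factors. -/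
lemma sum_middle {Γ : Type} [Fintype Γ] (n ℓ : ℕ) (hℓ1 : 1 ≤ ℓ) (hℓ2 : 2 * ℓ ≤ n)
    (f : List Γ → ℝ) :
    ∑ S : Fin n → Γ with borderF (List.ofFn S) = ℓ,
        f (((List.ofFn S).drop ℓ).take (n - 2 * ℓ)) =
      (#{u : Fin ℓ → Γ | Unbordered (List.ofFn u)} : ℝ) *
        ∑ T : Fin (n - 2 * ℓ) → Γ, f (List.ofFn T) := by
  have hF : ∀ p : (Fin ℓ → Γ) × (Fin (n - 2 * ℓ) → Γ),
      borderF (List.ofFn (sandwich hℓ2 p)) = ℓ ↔ Unbordered (List.ofFn p.1) := by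
    intro p
    have := borderF_sandwich (List.ofFn p.1) (List.ofFn p.2) (by simpa using hℓ1)
    rwa [← ofFn_sandwich hℓ2, List.length_ofFn] at this
  rw [← nsmul_eq_mul, ← Finset.sum_const, ← Finset.sum_product']
  symm
  refine Finset.sum_bij (fun p _ => sandwich hℓ2 p) ?_ ?_ ?_ ?_
  · intro p hp
    simp only [Finset.mem_product, Finset.mem_filter, Finset.mem_univ, true_and, and_true] at hp ⊢
    exact (hF p).2 hp
  · intro p _ q _ h
    have h' := congrArg List.ofFn h
    simp only [ofFn_sandwich] at h'
    obtain ⟨h12, h3⟩ := List.append_inj' h' (by simp)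
    obtain ⟨_, h2⟩ := List.append_inj' h12 (by simp)
    exact Prod.ext (List.ofFn_injective h3) (List.ofFn_injective h2)
  · intro S hS
    simp only [Finset.mem_filter, Finset.mem_univ, true_and] at hS
    have hb := ((borderF_eq_iff _ _ hℓ1).1 hS).1
    have hs := exists_sandwich (List.ofFn S) ℓ (by simpa using hℓ2) hb
    obtain ⟨u, hu⟩ := exists_ofFn_eq ((List.ofFn S).take ℓ) ℓ (by simp; omega)
    obtain ⟨w, hw⟩ := exists_ofFn_eq (((List.ofFn S).drop ℓ).take ((List.ofFn S).length - 2 * ℓ))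
      (n - 2 * ℓ) (by simp; omega)
    have hSp : sandwich hℓ2 (u, w) = S := by
      apply List.ofFn_injective
      rw [ofFn_sandwich, hu, hw]
      exact hs.symm
    refine ⟨(u, w), ?_, hSp⟩
    simp only [Finset.mem_product, Finset.mem_filter, Finset.mem_univ, true_and, and_true]
    rw [← hF (u, w), hSp]
    exact hS
  · intro p _
    have := middle_sandwich (List.ofFn p.1) (List.ofFn p.2)
    rw [← ofFn_sandwich hℓ2, List.length_ofFn, List.length_ofFn] at this
    rw [this]

/-- for uniformly random `S ∈ Σⁿ` (`σ ≥ 2`, `n ≥ 2`, `1 ≤ ℓ ≤ n/2`), conditioned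
on the event `A = {F(S) = ℓ}` (assumed to have positive probability), the middle factor
`S[ℓ+1, n-ℓ]` is uniformly distributed on `Σ^{n-2ℓ}`; in particular, for every `t ≥ 0`,
`E[e^{t(n - L(S))} | F(S) = ℓ] ≤ e^{2tℓ}·E[e^{t(m - L(T))}]` where `m = n - 2ℓ` and `T` is
uniformly random in `Σᵐ`. -/
theorem conditional_middle_uniform (σ : ℕ) (hσ : 2 ≤ σ) (Γ : Type) [Fintype Γ] [DecidableEq Γ]
    (hcard : Fintype.card Γ = σ) (n ℓ : ℕ) (hn : 2 ≤ n) (hℓ1 : 1 ≤ ℓ) (hℓ2 : 2 * ℓ ≤ n)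
    (A : Finset (Fin n → Γ))
    (hA : A = univ.filter fun S => borderF (List.ofFn S) = ℓ)
    (hpos : 0 < A.card) (t : ℝ) (ht : 0 ≤ t) :
    (∀ w : List Γ, w.length = n - 2 * ℓ →
      (((A.filter fun S => ((List.ofFn S).drop ℓ).take (n - 2 * ℓ) = w).card : ℝ)) / (A.card : ℝ)
        = 1 / (σ : ℝ) ^ (n - 2 * ℓ)) ∧
    (∑ S ∈ A, Real.exp (t * ((n : ℝ) - (maxUnb (List.ofFn S) : ℝ)))) / (A.card : ℝ) ≤
      Real.exp (2 * t * ℓ) *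
        ((∑ T : Fin (n - 2 * ℓ) → Γ,
            Real.exp (t * (((n - 2 * ℓ : ℕ) : ℝ) - (maxUnb (List.ofFn T) : ℝ)))) /
          (σ : ℝ) ^ (n - 2 * ℓ)) := by
  classical
  set N : ℝ := (#{u : Fin ℓ → Γ | Unbordered (List.ofFn u)} : ℝ) with hN
  have key : ∀ f : List Γ → ℝ,
      ∑ S ∈ A, f (((List.ofFn S).drop ℓ).take (n - 2 * ℓ)) =
        N * ∑ T : Fin (n - 2 * ℓ) → Γ, f (List.ofFn T) := by
    intro f
    rw [hA, hN, ← sum_middle n ℓ hℓ1 hℓ2 f]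
  have hσ0 : (0 : ℝ) < (σ : ℝ) ^ (n - 2 * ℓ) := by positivity
  have hcardA : (A.card : ℝ) = N * (σ : ℝ) ^ (n - 2 * ℓ) := by
    simpa [hcard] using key fun _ => 1
  have hApos : (0 : ℝ) < A.card := by exact_mod_cast hpos
  have hN0 : N ≠ 0 := by
    intro h
    rw [h, zero_mul] at hcardA
    exact hApos.ne' hcardA
  constructor
  · intro w hw
    have hcount : ((A.filter fun S =>
        ((List.ofFn S).drop ℓ).take (n - 2 * ℓ) = w).card : ℝ) = N := by
      have h := key fun l => if l = w then 1 else 0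
      obtain ⟨w', rfl⟩ := exists_ofFn_eq w _ hw
      simpa [List.ofFn_injective.eq_iff] using h
    rw [hcount, hcardA]
    field_simp
  · have hle : ∑ S ∈ A, Real.exp (t * ((n : ℝ) - (maxUnb (List.ofFn S) : ℝ))) ≤
        ∑ S ∈ A, Real.exp (2 * t * ℓ) * Real.exp (t * (((n - 2 * ℓ : ℕ) : ℝ) -
          (maxUnb (((List.ofFn S).drop ℓ).take (n - 2 * ℓ)) : ℝ))) := by
      refine Finset.sum_le_sum fun S _ => ?_
      rw [← Real.exp_add, Real.exp_le_exp, Nat.cast_sub hℓ2]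
      have hL : (maxUnb (((List.ofFn S).drop ℓ).take (n - 2 * ℓ)) : ℝ) ≤ maxUnb (List.ofFn S) :=
        Nat.cast_le.2 (maxUnb_le_of_infix
          ((List.take_prefix _ _).isInfix.trans (List.drop_suffix _ _).isInfix))
      have := mul_le_mul_of_nonneg_left hL ht
      push_cast
      linarith
    rw [← Finset.mul_sum, key fun l => Real.exp (t * (((n - 2 * ℓ : ℕ) : ℝ) - (maxUnb l : ℝ)))]
      at hle
    rw [div_le_iff₀ hApos, hcardA]
    refine hle.trans (le_of_eq ?_)
    field_simp
end

section
/- Let Σ be a finite alphabet, S ∈ Σⁿ with n ≥ 1, and let $ be a symbol not in Σ. Set k = n − L(S) and define S_$ = S[1,k]·$·S[L(S)+1,n], a string of length 2k+1 over Σ ∪ {$}. Then: (i) for every ℓ ≤ k, S has a border of length ℓ if and only if S_$ has a border of length ℓ; (ii) S_$ has no proper border of length greater than k; and consequently (iii) |S| − per(S) = |S_$| − per(S_$). -/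
/-!
A proper border of length `ℓ` of a string `T` is the same thing as a period `|T| - ℓ`
(`hasBorder_iff_isPeriod`), so `|T| - per T` is the length of the longest proper border
(or `0` if there is none). A factor inherits the periods of the whole string, so a period `p` of
`S` forces every unbordered factor to have length at most `p` (`maxUnb_le_of_isPeriod`); hence
`L(S) ≤ per S`, and every proper border of `S` has length at most `k = |S| - L(S)`.

The string `S_$` keeps the prefix and the suffix of `S` of length `k`, so the two strings have the
same borders of length at most `k`. A proper border of `S_$` longer than `k` would match the
central sentinel with a symbol of the suffix, which is impossible. Thus `S` and `S_$` have the
same proper borders, and therefore the same value of `|T| - per T`.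
-/

open Finset

theorem hasBorder_iff_isPeriod {α : Type*} (T : List α) (ℓ : ℕ) (h1 : 1 ≤ ℓ)
    (h2 : ℓ < T.length) : HasBorder T ℓ ↔ IsPeriod T (T.length - ℓ) := by
  constructor
  · rintro ⟨_, _, h⟩
    refine ⟨by omega, fun i hi => ?_⟩
    have hi' := congrArg (fun l => l[i]?) h
    simp only [List.getElem?_take, List.getElem?_drop] at hi'
    rw [if_pos (by omega), List.getElem?_eq_getElem (by omega),
      List.getElem?_eq_getElem (by omega)] at hi'
    simpa [Nat.add_comm] using hi'
  · rintro ⟨_, h⟩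
    refine ⟨h1, h2.le, ?_⟩
    apply List.ext_getElem
    · simp; omega
    · intro i hi _
      simp only [List.length_take] at hi
      have := h i (by omega)
      simpa [Nat.add_comm] using this

theorem isPeriod_of_infix {α : Type*} {S T : List α} {p : ℕ} (hT : T <:+: S)
    (hp : IsPeriod S p) : IsPeriod T p := by
  obtain ⟨s, t, rfl⟩ := hT
  refine ⟨hp.1, fun i hi => ?_⟩
  have key : ∀ j (hj : j < T.length),
      (s ++ T ++ t)[s.length + j]'(by simp; omega) = T[j] := by
    intro j hj
    rw [List.getElem_append_left (by simp; omega), List.getElem_append_right (by omega)]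
    simp
  have h := hp.2 (s.length + i) (by simp; omega)
  rw [key i (by omega)] at h
  simp only [Nat.add_assoc] at h
  rw [h]
  exact key (i + p) hi

theorem maxUnb_le_of_isPeriod {α : Type*} {S : List α} {p : ℕ} (hp : IsPeriod S p) :
    maxUnb S ≤ p := by
  apply csSup_le'
  rintro _ ⟨T, -, hT, hU, rfl⟩
  by_contra! hlt
  have hpos := hp.1
  apply hU (T.length - p) (by omega)
  rw [hasBorder_iff_isPeriod T _ (by omega) (by omega), Nat.sub_sub_self hlt.le]
  exact isPeriod_of_infix hT hp

theorem maxUnb_le_length {α : Type*} (S : List α) : maxUnb S ≤ S.length := by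
  apply csSup_le'
  rintro _ ⟨T, -, hT, -, rfl⟩
  exact hT.length_le

/-- A single letter is an unbordered factor; hence `k < |S|`, so that the borders of length at most
`k` are all proper. -/
theorem one_le_maxUnb {α : Type*} {S : List α} (hS : 1 ≤ S.length) : 1 ≤ maxUnb S := by
  apply le_csSup
  · refine ⟨S.length, ?_⟩
    rintro _ ⟨T, -, hT, -, rfl⟩
    exact hT.length_le
  · refine ⟨S.take 1, ?_, (List.take_prefix 1 S).isInfix, ?_, by simp; omega⟩
    · exact List.ne_nil_of_length_pos (by simp; omega)
    · intro ℓ hℓ hb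
      have := hb.1
      simp only [List.length_take] at hℓ
      omega

theorem isPeriod_per {α : Type*} {T : List α} (hT : 1 ≤ T.length) : IsPeriod T (per T) :=
  Nat.sInf_mem (s := {p | IsPeriod T p}) ⟨T.length, hT, fun i h => by omega⟩

/-- One half of the comparison of `|T| - per T` for two strings: it is monotone with respect to
inclusion of the sets of proper borders. -/
theorem length_sub_per_le {α β : Type*} {T : List α} {U : List β} (hT : 1 ≤ T.length)
    (h : ∀ ℓ, ℓ < T.length → HasBorder T ℓ → ℓ < U.length ∧ HasBorder U ℓ) :
    T.length - per T ≤ U.length - per U := by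
  have hper := isPeriod_per hT
  have hpos := hper.1
  rcases Nat.eq_zero_or_pos (T.length - per T) with h0 | h0
  · omega
  · have hb : HasBorder T (T.length - per T) := by
      rw [hasBorder_iff_isPeriod T _ h0 (by omega), Nat.sub_sub_self (by omega)]
      exact hper
    obtain ⟨hlt, hU⟩ := h _ (by omega) hb
    have hle : per U ≤ U.length - (T.length - per T) :=
      Nat.sInf_le ((hasBorder_iff_isPeriod U _ h0 hlt).1 hU)
    omega

/-- let `S ∈ Σⁿ` with `n ≥ 1`, `k = n - L(S)`, and let
`S_$ = S[1,k]·$·S[L(S)+1,n]` where `$ ∉ Σ` is a sentinel (modelled by `none` in `Option Σ`).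
Then `S_$` has length `2k + 1`; for every `ℓ ≤ k`, `S` has a border of length `ℓ` iff `S_$` does;
`S_$` has no proper border of length `> k`; and `|S| - per(S) = |S_$| - per(S_$)`. -/
theorem sentinel_reduction (Γ : Type) (S : List Γ) (hS : 1 ≤ S.length)
    (k : ℕ) (hk : k = S.length - maxUnb S)
    (Sd : List (Option Γ))
    (hSd : Sd = (S.take k).map some ++ [none] ++ (S.drop (maxUnb S)).map some) :
    Sd.length = 2 * k + 1 ∧
    (∀ ℓ : ℕ, ℓ ≤ k → (HasBorder S ℓ ↔ HasBorder Sd ℓ)) ∧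
    (∀ ℓ : ℕ, k < ℓ → ℓ < Sd.length → ¬ HasBorder Sd ℓ) ∧
    S.length - per S = Sd.length - per Sd := by
  have hL := maxUnb_le_length S
  have hL1 := one_le_maxUnb hS
  have hlen : Sd.length = 2 * k + 1 := by
    subst hSd; simp; omega
  have hsmall : ∀ ℓ : ℕ, ℓ ≤ k → (HasBorder S ℓ ↔ HasBorder Sd ℓ) := by
    intro ℓ hℓ
    have htake : Sd.take ℓ = (S.take ℓ).map some := by
      rw [hSd, List.append_assoc, List.take_append_of_le_length (by simp; omega),
        ← List.map_take, List.take_take, Nat.min_eq_left hℓ]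
    have hdrop : Sd.drop (Sd.length - ℓ) = (S.drop (S.length - ℓ)).map some := by
      have e : Sd.length - ℓ = ((S.take k).map some ++ [none]).length + (k - ℓ) := by
        rw [hlen]; simp; omega
      rw [e, hSd, List.drop_length_add_append, ← List.map_drop, List.drop_drop]
      congr 2
      omega
    unfold HasBorder
    rw [htake, hdrop, (List.map_injective_iff.2 (Option.some_injective Γ)).eq_iff, hlen]
    constructor
    · rintro ⟨a, _, c⟩; exact ⟨a, by omega, c⟩
    · rintro ⟨a, _, c⟩; exact ⟨a, by omega, c⟩
  have hlarge : ∀ ℓ : ℕ, k < ℓ → ℓ < Sd.length → ¬ HasBorder Sd ℓ := by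
    intro ℓ h1 h2 hb
    -- The sentinel at position `k` would equal the symbol `|S_$| - ℓ > 0` places to its right.
    have h := ((hasBorder_iff_isPeriod Sd ℓ (by omega) h2).1 hb).2 k (by omega)
    have hnone : Sd[k]? = some none := by
      rw [hSd, List.append_assoc, List.getElem?_append_right (by simp)]
      have : k - ((S.take k).map some).length = 0 := by simp; omega
      rw [this]; simp
    have hsome : Sd[k + (Sd.length - ℓ)]? ≠ some none := by
      rw [hSd, List.getElem?_append_right (by simp; omega)]
      simp
    rw [List.getElem?_eq_getElem (by omega)] at hnone hsome
    rw [h] at hnone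
    exact hsome hnone
  refine ⟨hlen, hsmall, hlarge, le_antisymm ?_ ?_⟩
  · apply length_sub_per_le hS
    intro ℓ h hb
    have hp := maxUnb_le_of_isPeriod ((hasBorder_iff_isPeriod S ℓ hb.1 h).1 hb)
    have hℓ : ℓ ≤ k := by omega
    exact ⟨by omega, (hsmall ℓ hℓ).1 hb⟩
  · apply length_sub_per_le (by omega)
    intro ℓ h hb
    have hℓ : ℓ ≤ k := by
      by_contra! hlt
      exact hlarge ℓ hlt h hb
    have hbS := (hsmall ℓ hℓ).2 hb
    exact ⟨by omega, hbS⟩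
end
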